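/- arXiv:math/0412229 — 11 statements merged into one kernel-verified Lean document; each statement's English description precedes it below -/
import Mathlib

section
/- Let m ≥ 1 and z ∈ ℂᵐ. Then Im(z_i · conj(z_j)) = 0 for all indices i, j ∈ {1,…,m} if and only if there exist λ ∈ ℂ and a real vector x = (x₁,…,x_m) ∈ ℝᵐ such that z_k = λ·x_k for all k. (This characterizes the zero level set μ⁻¹(0) of the moment map μ(z) = (Im(z_i·conj(z_j)))_{i<j} of the SO(m)-action on ℂᵐ as the set of complex multiples of real vectors.) -/
/-!
If some coordinate `z j` is nonzero, the vanishing of the moment map says that every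
`z k * conj (z j)` is real, so `z` is `(conj (z j))⁻¹` times a real vector; if there is no such
coordinate, `z = 0`. Conversely `(lam * s) * conj (lam * t) = |lam|² * s * t` is real for
real `s`, `t`.
-/

/-- The zero level set of the moment map of the `SO(m)`-action on `ℂᵐ`:
`Im(z_i · conj(z_j)) = 0` for all `i, j` if and only if `z` is a complex multiple
of a real vector, i.e. `z = λ·x` with `λ ∈ ℂ` and `x ∈ ℝᵐ`. -/
theorem moment_zero_iff_complex_multiple_of_real (m : ℕ) (hm : 1 ≤ m) (z : Fin m → ℂ) :
    (∀ i j : Fin m, (z i * (starRingEnd ℂ) (z j)).im = 0) ↔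
      ∃ (lam : ℂ) (x : Fin m → ℝ), ∀ k, z k = lam * (x k : ℂ) := by
  constructor
  · intro h
    by_cases hz : ∃ j, z j ≠ 0
    · obtain ⟨j, hj⟩ := hz
      -- `z k * conj (z j)` is real, so dividing by `conj (z j)` exhibits `z k` as a multiple
      -- of a real number by a factor independent of `k`.
      refine ⟨((starRingEnd ℂ) (z j))⁻¹, fun k => (z k * (starRingEnd ℂ) (z j)).re, fun k => ?_⟩
      have hc : (starRingEnd ℂ) (z j) ≠ 0 := (map_ne_zero _).2 hj
      have hre : (((z k * (starRingEnd ℂ) (z j)).re : ℝ) : ℂ) = z k * (starRingEnd ℂ) (z j) :=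
        Complex.ext (Complex.ofReal_re _) ((Complex.ofReal_im _).trans (h k j).symm)
      rw [hre]
      field_simp
    · push Not at hz
      exact ⟨0, 0, fun k => by simp [hz k]⟩
  · rintro ⟨lam, x, hx⟩ i j
    rw [hx i, hx j]
    simp only [map_mul, Complex.conj_ofReal, Complex.mul_im, Complex.mul_re, Complex.conj_re,
      Complex.conj_im, Complex.ofReal_re, Complex.ofReal_im]
    ring
end

section
/- Let n ≥ 2 be an integer and K a real constant. If φ is a C² function on an interval I ⊆ ℝ with values in (0, π/2) satisfying equation (21) on I, then the function θ ↦ sin^{n+1}(φ(θ))·cos²(φ(θ)) / √(sin²(φ(θ))cos²(φ(θ)) + (φ'(θ))²) − (K/2)·sin²(φ(θ)) is constant on I. (This is the conservation law (23), expressing that the Hamiltonian obtained by Legendre transform of the Lagrangian is a constant of the motion.) -/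
/-!
The conserved quantity is `L - φ' ∂L/∂φ'`, minus the Hamiltonian of the autonomous Lagrangian
`L = sin^{n-1} φ √(sin² φ cos² φ + φ'²) - (K/2) sin² φ`. Its `θ`-derivative is therefore `φ'` times
the Euler–Lagrange expression of `L`, which equals `sin φ cos φ (E - K)` with `E` the left-hand side
of the equation in `Eq21`, and so vanishes along solutions (`hasDerivAt_hamiltonian`). A function
with zero derivative on a convex subset of `ℝ` is constant there. The range condition on `φ` keeps
the argument of the square root positive.
-/

/-- Equation (21) of the paper: the Hamiltonian-minimal equation for the profile curve
`φ = φ(θ)` of an `SO(n)`-invariant Lagrangian submanifold of `CPⁿ`, written pointwise in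
terms of the values `φ, φ', φ''`. -/
def Eq21 (n : ℕ) (K φ φ' φ'' : ℝ) : Prop :=
  Real.sin φ ^ (n - 1) / Real.sqrt (Real.sin φ ^ 2 * Real.cos φ ^ 2 + φ' ^ 2) ^ 3 *
      (-(φ'' * Real.sin φ * Real.cos φ) +
        (((n : ℝ) + 1) * Real.cos φ ^ 2 - 2 * Real.sin φ ^ 2) * φ' ^ 2 +
        Real.sin φ ^ 2 * Real.cos φ ^ 2 * ((n : ℝ) * Real.cos φ ^ 2 - Real.sin φ ^ 2)) = K

/-- The conserved quantity `L - p ∂L/∂p` (the Hamiltonian with the opposite sign), in terms of the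
position `x = φ` and the velocity `p = φ'`. -/
noncomputable def hamiltonian (n : ℕ) (K x p : ℝ) : ℝ :=
  Real.sin x ^ (n + 1) * Real.cos x ^ 2 /
      Real.sqrt (Real.sin x ^ 2 * Real.cos x ^ 2 + p ^ 2) -
    K / 2 * Real.sin x ^ 2

/-- Energy conservation at a point: the derivative is `φ' sin φ cos φ` times the difference of the
two sides of the equation. -/
lemma hasDerivAt_hamiltonian {n : ℕ} (hn : 1 ≤ n) {K θ q : ℝ} {φ φ' : ℝ → ℝ}
    (hd1 : HasDerivAt φ (φ' θ) θ) (hd2 : HasDerivAt φ' q θ)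
    (hrange : φ θ ∈ Set.Ioo 0 (Real.pi / 2)) (heq : Eq21 n K (φ θ) (φ' θ) q) :
    HasDerivAt (fun t => hamiltonian n K (φ t) (φ' t)) 0 θ := by
  obtain ⟨m, rfl⟩ := Nat.exists_eq_add_of_le' hn
  have hs : 0 < Real.sin (φ θ) :=
    Real.sin_pos_of_pos_of_lt_pi hrange.1 (by linarith [hrange.2, Real.pi_pos])
  have hc : 0 < Real.cos (φ θ) :=
    Real.cos_pos_of_mem_Ioo ⟨by linarith [hrange.1, Real.pi_pos], hrange.2⟩
  have hR : 0 < Real.sin (φ θ) ^ 2 * Real.cos (φ θ) ^ 2 + φ' θ ^ 2 := by positivity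
  have hsin := hd1.sin
  have hcos := hd1.cos
  have hroot := (((hsin.pow 2).mul (hcos.pow 2)).add (hd2.pow 2)).sqrt hR.ne'
  have hr := Real.sqrt_pos.mpr hR
  have hH := (((hsin.pow (m + 1 + 1)).mul (hcos.pow 2)).div hroot hr.ne').sub
    ((hsin.pow 2).const_mul (K / 2))
  refine hH.congr_deriv ?_
  unfold Eq21 at heq
  simp only [Pi.add_apply, Pi.mul_apply, Pi.pow_apply]
  have hr2 := Real.sq_sqrt hR.le
  generalize Real.sqrt (Real.sin (φ θ) ^ 2 * Real.cos (φ θ) ^ 2 + φ' θ ^ 2) = r at *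
  generalize Real.sin (φ θ) = s at *
  generalize Real.cos (φ θ) = c at *
  generalize φ' θ = p at *
  rw [← heq]
  simp only [Nat.add_sub_cancel]
  push_cast
  field_simp
  -- Over the common denominator `r ^ 3`, the two sides agree modulo `r ^ 2 = s²c² + p²`.
  rw [hr2]
  ring

/-- The conservation law (23): along any C² solution of equation (21) on an interval `I`
with values in `(0, π/2)`, the quantity
`sin^{n+1}φ·cos²φ / √(sin²φcos²φ + φ'²) − (K/2)·sin²φ` is constant. -/
theorem eq21_first_integral (n : ℕ) (hn : 2 ≤ n) (K : ℝ) (I : Set ℝ)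
    (hI : I.OrdConnected) (φ φ' φ'' : ℝ → ℝ)
    (hd1 : ∀ θ ∈ I, HasDerivAt φ (φ' θ) θ)
    (hd2 : ∀ θ ∈ I, HasDerivAt φ' (φ'' θ) θ)
    (hcont : ContinuousOn φ'' I)
    (hrange : ∀ θ ∈ I, φ θ ∈ Set.Ioo 0 (Real.pi / 2))
    (heq : ∀ θ ∈ I, Eq21 n K (φ θ) (φ' θ) (φ'' θ)) :
    ∀ θ₁ ∈ I, ∀ θ₂ ∈ I,
      Real.sin (φ θ₁) ^ (n + 1) * Real.cos (φ θ₁) ^ 2 /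
            Real.sqrt (Real.sin (φ θ₁) ^ 2 * Real.cos (φ θ₁) ^ 2 + φ' θ₁ ^ 2) -
          K / 2 * Real.sin (φ θ₁) ^ 2 =
        Real.sin (φ θ₂) ^ (n + 1) * Real.cos (φ θ₂) ^ 2 /
            Real.sqrt (Real.sin (φ θ₂) ^ 2 * Real.cos (φ θ₂) ^ 2 + φ' θ₂ ^ 2) -
          K / 2 * Real.sin (φ θ₂) ^ 2 := by
  intro θ₁ h₁ θ₂ h₂
  have h := hI.convex.norm_image_sub_le_of_norm_hasDerivWithin_le (C := 0)
    (f := fun t => hamiltonian n K (φ t) (φ' t)) (f' := fun _ => 0)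
    (fun θ hθ => (hasDerivAt_hamiltonian (by omega) (hd1 θ hθ) (hd2 θ hθ) (hrange θ hθ)
      (heq θ hθ)).hasDerivWithinAt) (by simp) h₂ h₁
  rw [zero_mul, norm_le_zero_iff, sub_eq_zero] at h
  exact h
end

section
/- Let n ≥ 2 be an integer, K a real constant, and φ : ℝ → (0, π/2) a C² function. Then φ satisfies equation (21) on ℝ if and only if for all real numbers α < β and every C¹ function η : ℝ → ℝ with η(α) = η(β) = 0 and η supported in [α, β], the function s ↦ ∫_α^β [ sin^{n-1}(φ+sη)·√(sin²(φ+sη)cos²(φ+sη) + (φ'+sη')²) − (K/2)·sin²(φ+sη) ] dθ has derivative 0 at s = 0. (That is, equation (21) is the Euler–Lagrange equation of the functional (20).) -/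
open MeasureTheory Filter Topology Set

/-! ### The Lagrangian and its derivatives -/

/-- The quantity `R = sin²u cos²u + p²` under the square root. -/
noncomputable def lagrR (u p : ℝ) : ℝ := Real.sin u ^ 2 * Real.cos u ^ 2 + p ^ 2

/-- The Lagrangian `L(u, p)` of the functional, for `n = m + 2`. -/
noncomputable def lagr (m : ℕ) (K u p : ℝ) : ℝ :=
  Real.sin u ^ (m + 1) * √(lagrR u p) - K / 2 * Real.sin u ^ 2

/-- The partial derivative `∂L/∂u` (valid where `R ≠ 0`). -/
noncomputable def lagrU (m : ℕ) (K u p : ℝ) : ℝ :=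
  ((m : ℝ) + 1) * Real.sin u ^ m * Real.cos u * √(lagrR u p) +
    Real.sin u ^ (m + 1) * (Real.sin u * Real.cos u * (Real.cos u ^ 2 - Real.sin u ^ 2)
      / √(lagrR u p)) -
    K * (Real.sin u * Real.cos u)

/-- The partial derivative `∂L/∂p` (valid where `R ≠ 0`). -/
noncomputable def lagrP (m : ℕ) (u p : ℝ) : ℝ :=
  Real.sin u ^ (m + 1) * (p / √(lagrR u p))

/-- The total derivative `d/dθ (∂L/∂p)` along a curve with `u' = p` and `p' = q`. -/
noncomputable def lagrPDeriv (m : ℕ) (u p q : ℝ) : ℝ :=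
  ((m : ℝ) + 1) * Real.sin u ^ m * Real.cos u * p * (p / √(lagrR u p)) +
    Real.sin u ^ (m + 1) *
      ((q * √(lagrR u p) - p * ((Real.sin u * Real.cos u *
        (Real.cos u ^ 2 - Real.sin u ^ 2) * p + p * q) / √(lagrR u p))) / √(lagrR u p) ^ 2)

lemma lagrR_pos {u : ℝ} (hu : u ∈ Ioo 0 (Real.pi / 2)) (p : ℝ) : 0 < lagrR u p := by
  have h1 := Real.sin_pos_of_pos_of_lt_pi hu.1 (by linarith [hu.2, Real.pi_pos])
  have h2 := Real.cos_pos_of_mem_Ioo ⟨by linarith [hu.1, Real.pi_pos], hu.2⟩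
  unfold lagrR
  positivity

section Continuity

variable {X : Type*} [TopologicalSpace X] {a b d : X → ℝ} {x : X}

lemma continuousAt_lagrR (ha : ContinuousAt a x) (hb : ContinuousAt b x) :
    ContinuousAt (fun z => lagrR (a z) (b z)) x := by
  unfold lagrR
  fun_prop

lemma continuousAt_lagrU (m : ℕ) (K : ℝ) (ha : ContinuousAt a x) (hb : ContinuousAt b x)
    (hR : 0 < lagrR (a x) (b x)) : ContinuousAt (fun z => lagrU m K (a z) (b z)) x := by
  have h0 := (Real.sqrt_pos.2 hR).ne'
  have h1 := continuousAt_lagrR ha hb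
  unfold lagrU
  fun_prop (disch := assumption)

lemma continuousAt_lagrP (m : ℕ) (ha : ContinuousAt a x) (hb : ContinuousAt b x)
    (hR : 0 < lagrR (a x) (b x)) : ContinuousAt (fun z => lagrP m (a z) (b z)) x := by
  have h0 := (Real.sqrt_pos.2 hR).ne'
  have h1 := continuousAt_lagrR ha hb
  unfold lagrP
  fun_prop (disch := assumption)

lemma continuousAt_lagrPDeriv (m : ℕ) (ha : ContinuousAt a x) (hb : ContinuousAt b x)
    (hd : ContinuousAt d x) (hR : 0 < lagrR (a x) (b x)) :
    ContinuousAt (fun z => lagrPDeriv m (a z) (b z) (d z)) x := by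
  have h0 := (Real.sqrt_pos.2 hR).ne'
  have h2 := pow_ne_zero 2 h0
  have h1 := continuousAt_lagrR ha hb
  unfold lagrPDeriv
  fun_prop (disch := assumption)

end Continuity

lemma hasDerivAt_sqrt_lagrR {u p : ℝ → ℝ} {u' p' t : ℝ} (hu : HasDerivAt u u' t)
    (hp : HasDerivAt p p' t) (hR : lagrR (u t) (p t) ≠ 0) :
    HasDerivAt (fun s => √(lagrR (u s) (p s)))
      ((Real.sin (u t) * Real.cos (u t) * (Real.cos (u t) ^ 2 - Real.sin (u t) ^ 2) * u'
        + p t * p') / √(lagrR (u t) (p t))) t := by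
  have h := (((hu.sin.fun_pow 2).fun_mul (hu.cos.fun_pow 2)).fun_add (hp.fun_pow 2)).sqrt hR
  refine h.congr_deriv ?_
  unfold lagrR
  rw [← mul_div_mul_left _ (√_) (two_ne_zero (α := ℝ))]
  congr 1
  ring

/-- Chain rule for the Lagrangian along a differentiable curve. -/
lemma hasDerivAt_lagr (m : ℕ) (K : ℝ) {u p : ℝ → ℝ} {u' p' t : ℝ} (hu : HasDerivAt u u' t)
    (hp : HasDerivAt p p' t) (hR : lagrR (u t) (p t) ≠ 0) :
    HasDerivAt (fun s => lagr m K (u s) (p s))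
      (lagrU m K (u t) (p t) * u' + lagrP m (u t) (p t) * p') t := by
  have h := ((hu.sin.fun_pow (m + 1)).fun_mul (hasDerivAt_sqrt_lagrR hu hp hR)).fun_sub
    ((hu.sin.fun_pow 2).const_mul (K / 2))
  refine h.congr_deriv ?_
  unfold lagrU lagrP
  simp only [Nat.add_sub_cancel]
  push_cast
  ring

lemma hasDerivAt_lagrP (m : ℕ) {u p : ℝ → ℝ} {q t : ℝ} (hu : HasDerivAt u (p t) t)
    (hp : HasDerivAt p q t) (hR : 0 < lagrR (u t) (p t)) :
    HasDerivAt (fun s => lagrP m (u s) (p s)) (lagrPDeriv m (u t) (p t) q) t := by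
  have h := (hu.sin.fun_pow (m + 1)).fun_mul
    (hp.fun_div (hasDerivAt_sqrt_lagrR hu hp hR.ne') (Real.sqrt_pos.2 hR).ne')
  refine h.congr_deriv ?_
  unfold lagrPDeriv
  simp only [Nat.add_sub_cancel]
  push_cast
  ring

/-! ### The Euler–Lagrange expression -/

/-- The Euler–Lagrange expression is `sin u cos u` times the defect of the equation. -/
lemma lagrU_sub_lagrPDeriv (m : ℕ) (K : ℝ) {u : ℝ} (p q : ℝ) (hu : u ∈ Ioo 0 (Real.pi / 2)) :
    lagrU m K u p - lagrPDeriv m u p q = Real.sin u * Real.cos u *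
      (Real.sin u ^ (m + 1) / √(lagrR u p) ^ 3 *
        (-(q * Real.sin u * Real.cos u) +
          (((m : ℝ) + 3) * Real.cos u ^ 2 - 2 * Real.sin u ^ 2) * p ^ 2 +
          Real.sin u ^ 2 * Real.cos u ^ 2 *
            (((m : ℝ) + 2) * Real.cos u ^ 2 - Real.sin u ^ 2)) - K) := by
  have hR := lagrR_pos hu p
  have h0 := Real.sqrt_pos.2 hR
  have h2 : √(lagrR u p) ^ 2 = Real.sin u ^ 2 * Real.cos u ^ 2 + p ^ 2 := Real.sq_sqrt hR.le
  unfold lagrU lagrPDeriv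
  generalize √(lagrR u p) = r at *
  generalize Real.sin u = s at *
  generalize Real.cos u = c at *
  field_simp
  linear_combination ((m + 1) * s ^ m * c * (r ^ 2 + s ^ 2 * c ^ 2)
    + s ^ (m + 1) * (s * c * (c ^ 2 - s ^ 2)) - s ^ (m + 1) * q) * h2

/-! ### The first variation -/

/-- Differentiation under the integral sign on a compact interval, when the `s`-derivative exists
near `{0} × [α, β]` and is continuous at each point of it. -/
lemma hasDerivAt_integral_of_continuousAt {F F' : ℝ → ℝ → ℝ} {α β : ℝ} (hαβ : α ≤ β)
    (hF : Continuous (Function.uncurry F))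
    (hF' : ∀ θ ∈ Icc α β, ContinuousAt (Function.uncurry F') (0, θ))
    (hd : ∀ θ ∈ Icc α β, ∀ᶠ z : ℝ × ℝ in 𝓝 (0, θ),
      HasDerivAt (fun s => F s z.2) (F' z.1 z.2) z.1) :
    HasDerivAt (fun s => ∫ θ in α..β, F s θ) (∫ θ in α..β, F' 0 θ) 0 := by
  have hc : ContinuousOn (fun θ => F' 0 θ) (Icc α β) := fun θ hθ =>
    (ContinuousAt.comp (f := fun θ : ℝ => ((0 : ℝ), θ)) (hF' θ hθ)
      (by fun_prop)).continuousWithinAt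
  obtain ⟨C, hC⟩ := isCompact_Icc.exists_bound_of_continuousOn hc
  -- The tube lemma makes the bound and the differentiability uniform in `θ`.
  have key : ∀ᶠ s in 𝓝 (0 : ℝ), ∀ θ ∈ Icc α β,
      ‖F' s θ‖ < C + 1 ∧ HasDerivAt (fun s => F s θ) (F' s θ) s := by
    refine isCompact_Icc.eventually_forall_of_forall_eventually fun θ hθ => ?_
    have h1 : ∀ᶠ z : ℝ × ℝ in 𝓝 (0, θ), ‖Function.uncurry F' z‖ < C + 1 :=
      (hF' θ hθ).norm.eventually_lt continuousAt_const (by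
        have := hC θ hθ
        simp only [Function.uncurry]
        linarith)
    filter_upwards [h1, hd θ hθ] with z hz1 hz2 using ⟨hz1, hz2⟩
  have hsub : uIoc α β ⊆ Icc α β := by
    rw [uIoc_of_le hαβ]; exact Ioc_subset_Icc_self
  refine (intervalIntegral.hasDerivAt_integral_of_dominated_loc_of_deriv_le (F := F) (F' := F')
    (bound := fun _ => C + 1) key ?_ ?_ ?_ ?_ ?_ ?_).2
  · exact .of_forall fun s => (hF.comp (by fun_prop : Continuous fun θ : ℝ => (s, θ))
      ).aestronglyMeasurable
  · exact (hF.comp (by fun_prop : Continuous fun θ : ℝ => ((0 : ℝ), θ))).intervalIntegrable _ _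
  · exact (hc.mono hsub).aestronglyMeasurable measurableSet_uIoc
  · exact .of_forall fun θ hθ s hs => (hs θ (hsub hθ)).1.le
  · exact intervalIntegrable_const
  · exact .of_forall fun θ hθ s hs => (hs θ (hsub hθ)).2

/-- The first variation formula: the derivative of `J(φ + sη)` at `s = 0` is the integral of the
Euler–Lagrange expression against `η`. -/
lemma hasDerivAt_variation (m : ℕ) (K : ℝ) {φ : ℝ → ℝ} (hφ : ContDiff ℝ 2 φ)
    (hrange : ∀ θ, φ θ ∈ Ioo 0 (Real.pi / 2)) {α β : ℝ} (hαβ : α < β) {η : ℝ → ℝ}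
    (hη : ContDiff ℝ 1 η) (hα : η α = 0) (hβ : η β = 0) :
    HasDerivAt (fun s : ℝ => ∫ θ in α..β, lagr m K (φ θ + s * η θ) (deriv φ θ + s * deriv η θ))
      (∫ θ in α..β, η θ * (lagrU m K (φ θ) (deriv φ θ) -
        lagrPDeriv m (φ θ) (deriv φ θ) (deriv (deriv φ) θ))) 0 := by
  have hφ0 : Continuous φ := hφ.continuous
  have hφ1 : ContDiff ℝ 1 (deriv φ) := hφ.deriv' (n := 1)
  have hφ2 : Continuous (deriv φ) := hφ1.continuous
  have hφ3 : Continuous (deriv (deriv φ)) := hφ1.continuous_deriv le_rfl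
  have hη0 : Continuous η := hη.continuous
  have hη1 : Continuous (deriv η) := hη.continuous_deriv le_rfl
  have hφd : ∀ θ, HasDerivAt φ (deriv φ θ) θ := fun θ =>
    (hφ.differentiable two_ne_zero θ).hasDerivAt
  have hφdd : ∀ θ, HasDerivAt (deriv φ) (deriv (deriv φ) θ) θ := fun θ =>
    (hφ1.differentiable one_ne_zero θ).hasDerivAt
  have hηd : ∀ θ, HasDerivAt η (deriv η θ) θ := fun θ =>
    (hη.differentiable one_ne_zero θ).hasDerivAt
  have hR : ∀ θ, 0 < lagrR (φ θ) (deriv φ θ) := fun θ => lagrR_pos (hrange θ) _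
  have hU : Continuous fun θ => lagrU m K (φ θ) (deriv φ θ) :=
    continuous_iff_continuousAt.2 fun θ =>
      continuousAt_lagrU m K hφ0.continuousAt hφ2.continuousAt (hR θ)
  have hP : Continuous fun θ => lagrP m (φ θ) (deriv φ θ) :=
    continuous_iff_continuousAt.2 fun θ =>
      continuousAt_lagrP m hφ0.continuousAt hφ2.continuousAt (hR θ)
  have hPD : Continuous fun θ => lagrPDeriv m (φ θ) (deriv φ θ) (deriv (deriv φ) θ) :=
    continuous_iff_continuousAt.2 fun θ =>
      continuousAt_lagrPDeriv m hφ0.continuousAt hφ2.continuousAt hφ3.continuousAt (hR θ)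
  have hu : Continuous fun z : ℝ × ℝ => φ z.2 + z.1 * η z.2 := by fun_prop
  have hp : Continuous fun z : ℝ × ℝ => deriv φ z.2 + z.1 * deriv η z.2 := by fun_prop
  have hR' : ∀ θ, 0 < lagrR (φ θ + 0 * η θ) (deriv φ θ + 0 * deriv η θ) := fun θ => by
    simpa using hR θ
  have main := hasDerivAt_integral_of_continuousAt
    (F := fun s θ => lagr m K (φ θ + s * η θ) (deriv φ θ + s * deriv η θ))
    (F' := fun s θ => lagrU m K (φ θ + s * η θ) (deriv φ θ + s * deriv η θ) * η θ +
      lagrP m (φ θ + s * η θ) (deriv φ θ + s * deriv η θ) * deriv η θ) hαβ.le ?_ ?_ ?_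
  · refine main.congr_deriv ?_
    simp only [zero_mul, add_zero]
    have ibp := intervalIntegral.integral_mul_deriv_eq_deriv_mul (a := α) (b := β)
      (fun θ _ => hasDerivAt_lagrP m (hφd θ) (hφdd θ) (hR θ)) (fun θ _ => hηd θ)
      (hPD.intervalIntegrable _ _) (hη1.intervalIntegrable _ _)
    rw [hα, hβ, mul_zero, mul_zero, sub_zero, zero_sub] at ibp
    rw [intervalIntegral.integral_add ((hU.fun_mul hη0).intervalIntegrable _ _)
      ((hP.fun_mul hη1).intervalIntegrable _ _), ibp, ← sub_eq_add_neg,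
      ← intervalIntegral.integral_sub ((hU.fun_mul hη0).intervalIntegrable _ _)
      ((hPD.fun_mul hη0).intervalIntegrable _ _)]
    congr 1 with θ
    ring
  · unfold Function.uncurry lagr lagrR
    fun_prop
  · intro θ _
    have h1 : ContinuousAt (fun z : ℝ × ℝ => η z.2) (0, θ) := by fun_prop
    have h2 : ContinuousAt (fun z : ℝ × ℝ => deriv η z.2) (0, θ) := by fun_prop
    have h3 := continuousAt_lagrU m K (hu.continuousAt (x := (0, θ)))
      (hp.continuousAt (x := (0, θ))) (hR' θ)
    have h4 := continuousAt_lagrP m (hu.continuousAt (x := (0, θ)))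
      (hp.continuousAt (x := (0, θ))) (hR' θ)
    exact (h3.fun_mul h1).fun_add (h4.fun_mul h2)
  · intro θ _
    filter_upwards [(continuousAt_lagrR (x := ((0 : ℝ), θ)) hu.continuousAt
      hp.continuousAt).eventually_ne (hR' θ).ne'] with z hz
    exact hasDerivAt_lagr m K
      (((hasDerivAt_id z.1).mul_const (η z.2)).const_add (φ z.2) |>.congr_deriv (one_mul _))
      (((hasDerivAt_id z.1).mul_const (deriv η z.2)).const_add (deriv φ z.2)
        |>.congr_deriv (one_mul _)) hz

/-- Equation (21) is the Euler–Lagrange equation of the functional (20):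
a C² function `φ : ℝ → (0, π/2)` satisfies (21) if and only if for all `α < β` and every
C¹ variation `η` vanishing at `α, β` and supported in `[α, β]`, the first variation of
`J(φ + sη) = ∫_α^β [ sin^{n-1}(φ+sη)·√(sin²(φ+sη)cos²(φ+sη) + (φ'+sη')²)
− (K/2)·sin²(φ+sη) ] dθ` vanishes at `s = 0`. -/
theorem eq21_iff_euler_lagrange (n : ℕ) (hn : 2 ≤ n) (K : ℝ) (φ : ℝ → ℝ)
    (hφ : ContDiff ℝ 2 φ) (hrange : ∀ θ, φ θ ∈ Set.Ioo 0 (Real.pi / 2)) :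
    (∀ θ, Eq21 n K (φ θ) (deriv φ θ) (deriv (deriv φ) θ)) ↔
      ∀ α β : ℝ, α < β → ∀ η : ℝ → ℝ, ContDiff ℝ 1 η → η α = 0 → η β = 0 →
        Function.support η ⊆ Set.Icc α β →
        HasDerivAt (fun s : ℝ => ∫ θ in α..β,
          (Real.sin (φ θ + s * η θ) ^ (n - 1) *
              Real.sqrt (Real.sin (φ θ + s * η θ) ^ 2 * Real.cos (φ θ + s * η θ) ^ 2 +
                (deriv φ θ + s * deriv η θ) ^ 2) -
            K / 2 * Real.sin (φ θ + s * η θ) ^ 2)) 0 0 := by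
  obtain ⟨m, rfl⟩ : ∃ m, n = m + 2 := ⟨n - 2, by omega⟩
  set E : ℝ → ℝ := fun θ => lagrU m K (φ θ) (deriv φ θ) -
    lagrPDeriv m (φ θ) (deriv φ θ) (deriv (deriv φ) θ) with hE
  have hEq : ∀ θ, Eq21 (m + 2) K (φ θ) (deriv φ θ) (deriv (deriv φ) θ) ↔ E θ = 0 := by
    intro θ
    have h1 := Real.sin_pos_of_pos_of_lt_pi (hrange θ).1
      (by linarith [(hrange θ).2, Real.pi_pos])
    have h2 := Real.cos_pos_of_mem_Ioo
      ⟨by linarith [(hrange θ).1, Real.pi_pos], (hrange θ).2⟩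
    simp only [hE]
    rw [lagrU_sub_lagrPDeriv m K _ _ (hrange θ), mul_eq_zero,
      or_iff_right (mul_pos h1 h2).ne', sub_eq_zero]
    have h3 : ((m + 2 : ℕ) : ℝ) + 1 = m + 3 := by push_cast; ring
    have h4 : ((m + 2 : ℕ) : ℝ) = m + 2 := by push_cast; ring
    rw [Eq21, h3, h4]
    rfl
  have hvar : ∀ α β : ℝ, α < β → ∀ η : ℝ → ℝ, ContDiff ℝ 1 η → η α = 0 → η β = 0 →
      HasDerivAt (fun s : ℝ => ∫ θ in α..β,
          (Real.sin (φ θ + s * η θ) ^ (m + 2 - 1) *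
              Real.sqrt (Real.sin (φ θ + s * η θ) ^ 2 * Real.cos (φ θ + s * η θ) ^ 2 +
                (deriv φ θ + s * deriv η θ) ^ 2) -
            K / 2 * Real.sin (φ θ + s * η θ) ^ 2)) (∫ θ in α..β, η θ * E θ) 0 :=
    fun α β hαβ η hη hα hβ => hasDerivAt_variation m K hφ hrange hαβ hη hα hβ
  have hEc : Continuous E := by
    have hφ1 : ContDiff ℝ 1 (deriv φ) := hφ.deriv' (n := 1)
    have hR : ∀ θ, 0 < lagrR (φ θ) (deriv φ θ) := fun θ => lagrR_pos (hrange θ) _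
    exact continuous_iff_continuousAt.2 fun θ =>
      (continuousAt_lagrU m K hφ.continuous.continuousAt hφ1.continuous.continuousAt (hR θ)).sub
      (continuousAt_lagrPDeriv m hφ.continuous.continuousAt hφ1.continuous.continuousAt
        (hφ1.continuous_deriv le_rfl).continuousAt (hR θ))
  simp only [hEq]
  constructor
  · intro h α β hαβ η hη hα hβ _
    simpa [h] using hvar α β hαβ η hη hα hβ
  · intro h
    have hae : E =ᵐ[volume] 0 := by
      refine ae_eq_zero_of_integral_contDiff_smul_eq_zero hEc.locallyIntegrable ?_
      intro g hg hgc
      -- An interval with the support of `g` in its interior.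
      obtain ⟨r, hr⟩ := hgc.isCompact.isBounded.subset_ball 0
      have hs : Function.support g ⊆ Ioo (-(max r 1)) (max r 1) := fun x hx => by
        have := hr (subset_tsupport g hx)
        rw [Metric.mem_ball, dist_zero_right, Real.norm_eq_abs] at this
        exact abs_lt.1 (this.trans_le (le_max_left _ _))
      have hr1 : 1 ≤ max r 1 := le_max_right _ _
      have hg0 : g (-(max r 1)) = 0 :=
        Function.notMem_support.1 fun hx => lt_irrefl _ (hs hx).1
      have hg1 : g (max r 1) = 0 :=
        Function.notMem_support.1 fun hx => lt_irrefl _ (hs hx).2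
      have hg' : ContDiff ℝ 1 g := hg.of_le (by exact_mod_cast le_top)
      have h0 := (hvar _ _ (by linarith) g hg' hg0 hg1).unique
        (h _ _ (by linarith) g hg' hg0 hg1 (hs.trans Ioo_subset_Icc_self))
      rw [intervalIntegral.integral_eq_integral_of_support_subset] at h0
      · exact h0
      · exact (Function.support_mul_subset_left _ _).trans (hs.trans Ioo_subset_Ioc_self)
    have := (hEc.ae_eq_iff_eq volume continuous_const).1 hae
    exact fun θ => congrFun this θ
end

section
/- Let n ≥ 2 be an integer, K ≠ 0 and λ real constants such that λ ∉ [0, −K/2] if K < 0, respectively λ ∉ [−K/2, 0] if K > 0. Suppose φ is a differentiable function on an interval I ⊆ ℝ with values in (0, π/2) satisfying the first integral (23): sin^{n+1}(φ)·cos²(φ) / √(sin²(φ)cos²(φ) + (φ')²) = λ + (K/2)·sin²(φ) on I. Then there exist ε > 0 and C > 0 such that ε ≤ φ(θ) ≤ π/2 − ε and |φ'(θ)| ≤ C for all θ ∈ I. (In particular φ stays uniformly away from the singular values 0 and π/2 and φ' cannot blow up.) -/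
/-!
Both sides of the first integral are controlled at each point separately. The right-hand side
`lam + (K / 2) sin² φ` lies between `lam` and `lam + K / 2`, and the left-hand side is positive on
`(0, π/2)`; the condition on `lam` says exactly that `lam` and `lam + K / 2` are both positive or
both negative, so the second case is impossible unless `I` is empty. In the first case, the
right-hand side is at least `m = min lam (lam + K / 2) > 0`, hence
`m √(sin² φ cos² φ + φ'²) ≤ sin ^ (n + 1) φ cos² φ`. Bounding the root below by `sin φ cos φ` gives
`m ≤ sin ^ n φ cos φ`, so `sin φ` and `cos φ` are at least `m`; bounding it below by `|φ'|` gives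
`m |φ'| ≤ 1`. The choice `ε = m`, `C = 1 / m` then works, as `sin x ≤ x`.
-/

/-- The algebraic core, with `s`, `c`, `p` standing for `sin φ`, `cos φ`, `φ'`. -/
lemma bounds_of_le_quotient {n : ℕ} (hn : n ≠ 0) {m s c p : ℝ} (hm : 0 < m)
    (hs : 0 < s) (hc : 0 < c) (hs1 : s ≤ 1) (hc1 : c ≤ 1)
    (h : m ≤ s ^ (n + 1) * c ^ 2 / Real.sqrt (s ^ 2 * c ^ 2 + p ^ 2)) :
    m ≤ s ∧ m ≤ c ∧ |p| ≤ 1 / m := by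
  have hsc : 0 < s * c := mul_pos hs hc
  have hR : 0 < Real.sqrt (s ^ 2 * c ^ 2 + p ^ 2) := Real.sqrt_pos.mpr (by positivity)
  rw [le_div_iff₀ hR] at h
  have h1 : s * c ≤ Real.sqrt (s ^ 2 * c ^ 2 + p ^ 2) :=
    Real.le_sqrt_of_sq_le (by nlinarith [sq_nonneg p])
  have h2 : |p| ≤ Real.sqrt (s ^ 2 * c ^ 2 + p ^ 2) :=
    Real.abs_le_sqrt (by nlinarith [sq_nonneg (s * c)])
  have h3 : m ≤ s ^ n * c := by
    refine le_of_mul_le_mul_right ?_ hsc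
    calc m * (s * c) ≤ m * Real.sqrt (s ^ 2 * c ^ 2 + p ^ 2) := by gcongr
      _ ≤ s ^ (n + 1) * c ^ 2 := h
      _ = s ^ n * c * (s * c) := by ring
  have hsn : s ^ n ≤ s := pow_le_of_le_one hs.le hs1 hn
  refine ⟨?_, ?_, ?_⟩
  · calc m ≤ s ^ n * c := h3
      _ ≤ s ^ n := mul_le_of_le_one_right (by positivity) hc1
      _ ≤ s := hsn
  · exact h3.trans (mul_le_of_le_one_left hc.le (hsn.trans hs1))
  · rw [le_div_iff₀ hm, mul_comm]
    calc m * |p| ≤ m * Real.sqrt (s ^ 2 * c ^ 2 + p ^ 2) := by gcongr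
      _ ≤ s ^ (n + 1) * c ^ 2 := h
      _ ≤ 1 := mul_le_one₀ (pow_le_one₀ hs.le hs1) (by positivity) (pow_le_one₀ hc.le hc1)


/-- A priori bounds from the first integral (23): if `λ ∉ [0, −K/2]` (case `K < 0`),
resp. `λ ∉ [−K/2, 0]` (case `K > 0`), then any differentiable solution `φ` of (23) on an
interval `I` with values in `(0, π/2)` stays uniformly away from `0` and `π/2`, and its
derivative is uniformly bounded. -/
theorem eq23_a_priori_bounds (n : ℕ) (hn : 2 ≤ n) (K lam : ℝ) (hK : K ≠ 0)
    (hneg : K < 0 → lam ∉ Set.Icc 0 (-K / 2))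
    (hpos : 0 < K → lam ∉ Set.Icc (-K / 2) 0)
    (I : Set ℝ) (hI : I.OrdConnected) (φ φ' : ℝ → ℝ)
    (hd : ∀ θ ∈ I, HasDerivAt φ (φ' θ) θ)
    (hrange : ∀ θ ∈ I, φ θ ∈ Set.Ioo 0 (Real.pi / 2))
    (h23 : ∀ θ ∈ I,
      Real.sin (φ θ) ^ (n + 1) * Real.cos (φ θ) ^ 2 /
          Real.sqrt (Real.sin (φ θ) ^ 2 * Real.cos (φ θ) ^ 2 + φ' θ ^ 2) =
        lam + K / 2 * Real.sin (φ θ) ^ 2) :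
    ∃ ε > 0, ∃ C > 0, ∀ θ ∈ I,
      ε ≤ φ θ ∧ φ θ ≤ Real.pi / 2 - ε ∧ |φ' θ| ≤ C := by
  have key : (0 < lam ∧ 0 < lam + K / 2) ∨ (lam < 0 ∧ lam + K / 2 < 0) := by
    rcases lt_or_gt_of_ne hK with hK' | hK'
    · rcases lt_or_ge lam 0 with h | h
      · exact .inr ⟨h, by linarith⟩
      · have : -K / 2 < lam := by
          by_contra! h'
          exact hneg hK' ⟨h, h'⟩
        exact .inl ⟨by linarith, by linarith⟩
    · rcases le_or_gt lam 0 with h | h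
      · have : lam < -K / 2 := by
          by_contra! h'
          exact hpos hK' ⟨h', h⟩
        exact .inr ⟨by linarith, by linarith⟩
      · exact .inl ⟨h, by linarith⟩
  have hsin : ∀ θ ∈ I, 0 < Real.sin (φ θ) := fun θ hθ =>
    Real.sin_pos_of_pos_of_lt_pi (hrange θ hθ).1 (by linarith [(hrange θ hθ).2, Real.pi_pos])
  have hcos : ∀ θ ∈ I, 0 < Real.cos (φ θ) := fun θ hθ =>
    Real.cos_pos_of_mem_Ioo ⟨by linarith [(hrange θ hθ).1, Real.pi_pos], (hrange θ hθ).2⟩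
  have hsq : ∀ θ, Real.sin (φ θ) ^ 2 ≤ 1 := fun θ => Real.sin_sq_le_one _
  rcases key with ⟨h0, h1⟩ | ⟨h0, h1⟩
  · have hm : 0 < min lam (lam + K / 2) := lt_min h0 h1
    refine ⟨min lam (lam + K / 2), hm, 1 / min lam (lam + K / 2), by positivity, fun θ hθ => ?_⟩
    have hle : min lam (lam + K / 2) ≤ lam + K / 2 * Real.sin (φ θ) ^ 2 := by
      rcases le_total 0 K with hK' | hK'
      · exact (min_le_left _ _).trans (by nlinarith [sq_nonneg (Real.sin (φ θ))])
      · exact (min_le_right _ _).trans (by nlinarith [hsq θ])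
    rw [← h23 θ hθ] at hle
    obtain ⟨hs, hc, hp⟩ := bounds_of_le_quotient (by omega) hm (hsin θ hθ) (hcos θ hθ)
      (Real.sin_le_one _) (Real.cos_le_one _) hle
    refine ⟨hs.trans (Real.sin_le (hrange θ hθ).1.le), ?_, hp⟩
    have := Real.sin_le (x := Real.pi / 2 - φ θ) (by linarith [(hrange θ hθ).2])
    rw [Real.sin_pi_div_two_sub] at this
    linarith
  · -- The right-hand side is negative and the left-hand side is not, so `I` is empty.
    refine ⟨1, one_pos, 1, one_pos, fun θ hθ => ?_⟩
    exfalso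
    have hlhs : 0 ≤ lam + K / 2 * Real.sin (φ θ) ^ 2 := by
      rw [← h23 θ hθ]
      have := hsin θ hθ
      positivity
    rcases le_total 0 K with hK' | hK'
    · nlinarith [hsq θ]
    · nlinarith [sq_nonneg (Real.sin (φ θ))]
end

section
/- (Lemma 3.1) Let n ≥ 2 be an integer, K ≠ 0 a real constant, a ∈ (0, π/2) and b ∈ ℝ, and set λ = sin^{n+1}(a)cos²(a)/√(sin²(a)cos²(a)+b²) − (K/2)sin²(a). If λ ∉ [0, −K/2] in case K < 0, respectively λ ∉ [−K/2, 0] in case K > 0, then there exists a unique C² function φ : ℝ → (0, π/2) satisfying equation (21) on all of ℝ with φ(0) = a and φ'(0) = b. -/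
open Set Filter Topology
open scoped NNReal

/-! ### The first order system and its first integral -/

/-- The first integral of `Eq21`, as a function of `x = φ` and `y = φ'`. -/
noncomputable def profileEnergy (n : ℕ) (K x y : ℝ) : ℝ :=
  Real.sin x ^ (n + 1) * Real.cos x ^ 2 / Real.sqrt (Real.sin x ^ 2 * Real.cos x ^ 2 + y ^ 2)
    - K / 2 * Real.sin x ^ 2

/-- The value of `φ''` prescribed by `Eq21` in terms of `x = φ ∈ (0, π/2)` and `y = φ'`. -/
noncomputable def profileAccel (n : ℕ) (K x y : ℝ) : ℝ :=
  ((((n : ℝ) + 1) * Real.cos x ^ 2 - 2 * Real.sin x ^ 2) * y ^ 2 +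
    Real.sin x ^ 2 * Real.cos x ^ 2 * ((n : ℝ) * Real.cos x ^ 2 - Real.sin x ^ 2) -
    K * Real.sqrt (Real.sin x ^ 2 * Real.cos x ^ 2 + y ^ 2) ^ 3 / Real.sin x ^ (n - 1)) /
      (Real.sin x * Real.cos x)

/-- The planar vector field of the first order system equivalent to `Eq21`. -/
noncomputable def profileField (n : ℕ) (K : ℝ) (q : ℝ × ℝ) : ℝ × ℝ :=
  (q.2, profileAccel n K q.1 q.2)

lemma sin_pos_of_mem {x : ℝ} (hx : x ∈ Ioo 0 (Real.pi / 2)) : 0 < Real.sin x :=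
  Real.sin_pos_of_pos_of_lt_pi hx.1 (by linarith [hx.2, Real.pi_pos])

lemma cos_pos_of_mem {x : ℝ} (hx : x ∈ Ioo 0 (Real.pi / 2)) : 0 < Real.cos x :=
  Real.cos_pos_of_mem_Ioo ⟨by linarith [hx.1, Real.pi_pos], hx.2⟩

lemma radicand_pos {x : ℝ} (hx : x ∈ Ioo 0 (Real.pi / 2)) (y : ℝ) :
    0 < Real.sin x ^ 2 * Real.cos x ^ 2 + y ^ 2 := by
  have := sin_pos_of_mem hx
  have := cos_pos_of_mem hx
  positivity

lemma eq21_iff (n : ℕ) (K : ℝ) {x : ℝ} (hx : x ∈ Ioo 0 (Real.pi / 2)) (y z : ℝ) :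
    Eq21 n K x y z ↔ z = profileAccel n K x y := by
  have hs := sin_pos_of_mem hx
  have hc := cos_pos_of_mem hx
  have hR := Real.sqrt_pos.2 (radicand_pos hx y)
  unfold Eq21 profileAccel
  set R := Real.sqrt (Real.sin x ^ 2 * Real.cos x ^ 2 + y ^ 2)
  have hP : 0 < Real.sin x ^ (n - 1) := by positivity
  set P := Real.sin x ^ (n - 1)
  rw [eq_div_iff (by positivity), div_mul_eq_mul_div, div_eq_iff (by positivity)]
  constructor
  · intro h
    have : K * R ^ 3 / P = _ := (div_eq_iff hP.ne').2 (by rw [← h, mul_comm])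
    rw [this]; ring
  · intro h
    have h2 : K * R ^ 3 / P * P = K * R ^ 3 := div_mul_cancel₀ _ hP.ne'
    linear_combination (-P) * h + h2

/-- Conservation of energy at a single time. -/
lemma Eq21.hasDerivAt_energy {n : ℕ} (hn : 1 ≤ n) {K : ℝ} {φ p : ℝ → ℝ} {t z : ℝ}
    (hφ : HasDerivAt φ (p t) t) (hp : HasDerivAt p z t) (hx : φ t ∈ Ioo 0 (Real.pi / 2))
    (h : Eq21 n K (φ t) (p t) z) :
    HasDerivAt (fun u => profileEnergy n K (φ u) (p u)) 0 t := by
  obtain ⟨m, rfl⟩ : ∃ m, n = m + 1 := ⟨n - 1, by omega⟩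
  have hQ := radicand_pos hx (p t)
  have hs := sin_pos_of_mem hx
  have hR := Real.sqrt_pos.2 hQ
  have hsq := Real.sq_sqrt hQ.le
  have h1 := hφ.sin
  have h2 := hφ.cos
  have h3 := (((h1.pow 2).mul (h2.pow 2)).add (hp.pow 2)).sqrt hQ.ne'
  have h4 := (((h1.pow (m + 1 + 1)).mul (h2.pow 2)).div h3 hR.ne').sub
    ((h1.pow 2).const_mul (K / 2))
  refine HasDerivAt.congr_deriv h4 ?_
  unfold Eq21 at h
  simp only [Nat.add_sub_cancel, Pi.add_apply, Pi.mul_apply, Pi.pow_apply] at h ⊢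
  set R := Real.sqrt (Real.sin (φ t) ^ 2 * Real.cos (φ t) ^ 2 + p t ^ 2)
  set s := Real.sin (φ t)
  set c := Real.cos (φ t)
  rw [div_mul_eq_mul_div, div_eq_iff (by positivity)] at h
  push_cast at h ⊢
  field_simp
  linear_combination c * p t * s * h +
    c * p t * ((m + 2) * s ^ (m + 1) * c ^ 2 - 2 * s ^ (m + 3)) * hsq

/-! ### A priori bounds from the energy -/

/-- The first term of the energy is positive, which upgrades the condition that `lam` avoids a
closed interval to a uniform lower bound. -/
lemma exists_energy_gap {n : ℕ} {K a b lam : ℝ} (ha : a ∈ Ioo 0 (Real.pi / 2)) (hK : K ≠ 0)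
    (hlam : lam = profileEnergy n K a b)
    (hneg : K < 0 → lam ∉ Icc 0 (-K / 2)) (hpos : 0 < K → lam ∉ Icc (-K / 2) 0) :
    ∃ δ > 0, ∀ x, δ ≤ lam + K / 2 * Real.sin x ^ 2 := by
  have hs := sin_pos_of_mem ha
  have hc := cos_pos_of_mem ha
  have hR := Real.sqrt_pos.2 (radicand_pos ha b)
  have hE : 0 < lam + K / 2 * Real.sin a ^ 2 := by
    rw [hlam, profileEnergy, sub_add_cancel]
    positivity
  have hb : ∀ x, 0 ≤ Real.sin x ^ 2 ∧ Real.sin x ^ 2 ≤ 1 :=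
    fun x => ⟨sq_nonneg _, Real.sin_sq_le_one x⟩
  have key : 0 < lam ∧ 0 < lam + K / 2 := by
    rcases lt_or_gt_of_ne hK with h | h
    · have h0 : 0 < lam := by nlinarith [hb a]
      have h1 := hneg h
      rw [mem_Icc, not_and, not_le] at h1
      exact ⟨h0, by linarith [h1 h0.le]⟩
    · have h0 : 0 < lam + K / 2 := by nlinarith [hb a]
      have h1 := hpos h
      rw [mem_Icc, not_and, not_le] at h1
      exact ⟨h1 (by linarith), h0⟩
  refine ⟨min lam (lam + K / 2), lt_min key.1 key.2, fun x => ?_⟩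
  rcases le_total K 0 with h | h
  · exact (min_le_right _ _).trans (by nlinarith [hb x])
  · exact (min_le_left _ _).trans (by nlinarith [hb x])

/-- With `R = √(sin² x cos² x + y²)`, the bound `R ≥ sin x cos x` gives `δ ≤ sinⁿ x cos x`, which
keeps `x` away from both endpoints, and `R ≥ |y|` gives `δ |y| ≤ 1`. -/
lemma bounds_of_le_energy {n : ℕ} (hn : 1 ≤ n) {x y δ : ℝ} (hδ : 0 < δ)
    (hx : x ∈ Ioo 0 (Real.pi / 2))
    (h : δ ≤ Real.sin x ^ (n + 1) * Real.cos x ^ 2 /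
      Real.sqrt (Real.sin x ^ 2 * Real.cos x ^ 2 + y ^ 2)) :
    x ∈ Icc δ (Real.pi / 2 - δ) ∧ y ∈ Icc (-(1 / δ)) (1 / δ) := by
  have hs := sin_pos_of_mem hx
  have hc := cos_pos_of_mem hx
  have hR := Real.sqrt_pos.2 (radicand_pos hx y)
  rw [le_div_iff₀ hR] at h
  have h1 : Real.sin x * Real.cos x ≤ Real.sqrt (Real.sin x ^ 2 * Real.cos x ^ 2 + y ^ 2) :=
    Real.le_sqrt_of_sq_le (by nlinarith [sq_nonneg y])
  have h2 : |y| ≤ Real.sqrt (Real.sin x ^ 2 * Real.cos x ^ 2 + y ^ 2) :=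
    Real.abs_le_sqrt (by nlinarith [sq_nonneg (Real.sin x * Real.cos x)])
  set R := Real.sqrt (Real.sin x ^ 2 * Real.cos x ^ 2 + y ^ 2)
  have hs1 := Real.sin_le_one x
  have hc1 := Real.cos_le_one x
  have hpow : Real.sin x ^ n ≤ Real.sin x := pow_le_of_le_one hs.le hs1 (by omega)
  have hsc : 0 < Real.sin x * Real.cos x := by positivity
  have hδsc : δ ≤ Real.sin x ^ n * Real.cos x := by
    refine le_of_mul_le_mul_right ?_ hsc
    calc δ * (Real.sin x * Real.cos x) ≤ δ * R := by gcongr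
      _ ≤ _ := h
      _ = _ := by ring
  have hδs : δ ≤ Real.sin x :=
    calc δ ≤ Real.sin x ^ n * Real.cos x := hδsc
      _ ≤ Real.sin x * 1 := by gcongr
      _ = Real.sin x := mul_one _
  have hδc : δ ≤ Real.cos x :=
    calc δ ≤ Real.sin x ^ n * Real.cos x := hδsc
      _ ≤ 1 * Real.cos x := by gcongr; exact hpow.trans hs1
      _ = Real.cos x := one_mul _
  have hδR : δ * R ≤ 1 :=
    h.trans (mul_le_one₀ (pow_le_one₀ hs.le hs1) (by positivity) (pow_le_one₀ hc.le hc1))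
  have h3 : |y| ≤ 1 / δ := by
    rw [le_div_iff₀ hδ, mul_comm]
    exact (mul_le_mul_of_nonneg_left h2 hδ.le).trans hδR
  have h4 : Real.sin x < x := Real.sin_lt hx.1
  have h5 : Real.cos x < Real.pi / 2 - x := by
    rw [← Real.sin_pi_div_two_sub]
    exact Real.sin_lt (by linarith [hx.2])
  exact ⟨⟨by linarith, by linarith⟩, abs_le.1 h3⟩

/-! ### Global existence for the modified field -/

lemma contDiffOn_profileField (n : ℕ) (K : ℝ) :
    ContDiffOn ℝ 1 (profileField n K) (Ioo 0 (Real.pi / 2) ×ˢ univ) := by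
  rintro ⟨x, y⟩ ⟨hx, -⟩
  apply ContDiffAt.contDiffWithinAt
  have hs := (sin_pos_of_mem hx).ne'
  have hc := (cos_pos_of_mem hx).ne'
  have hQ := (radicand_pos hx y).ne'
  have h1 : ContDiffAt ℝ 1 (fun q : ℝ × ℝ => Real.sin q.1) (x, y) := by fun_prop
  have h2 : ContDiffAt ℝ 1 (fun q : ℝ × ℝ => Real.cos q.1) (x, y) := by fun_prop
  have h3 : ContDiffAt ℝ 1 (fun q : ℝ × ℝ => q.2) (x, y) := by fun_prop
  have h4 := (((h1.pow 2).mul (h2.pow 2)).add (h3.pow 2)).sqrt hQ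
  refine h3.prodMk (ContDiffAt.div (ContDiffAt.sub ?_ ?_) (h1.mul h2) (mul_ne_zero hs hc))
  · fun_prop
  · exact ContDiffAt.div (contDiffAt_const.mul (h4.pow 3)) (h1.pow _) (pow_ne_zero _ hs)

/-- A `C¹` field on a compact rectangle extends, by precomposition with the coordinatewise
retraction onto the rectangle, to a bounded globally Lipschitz field on the plane. -/
lemma exists_lipschitz_extension {f : ℝ × ℝ → ℝ × ℝ} {α β M N : ℝ} (hαβ : α ≤ β) (hMN : M ≤ N)
    (hf : ContDiffOn ℝ 1 f (Icc α β ×ˢ Icc M N)) :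
    ∃ (v : ℝ × ℝ → ℝ × ℝ) (C L : ℝ≥0), LipschitzWith C v ∧ (∀ q, ‖v q‖ ≤ L) ∧
      EqOn v f (Icc α β ×ˢ Icc M N) := by
  have hcomp : IsCompact (Icc α β ×ˢ Icc M N) := isCompact_Icc.prod isCompact_Icc
  obtain ⟨C, hC⟩ := hf.exists_lipschitzOnWith one_ne_zero
    ((convex_Icc α β).prod (convex_Icc M N)) hcomp
  obtain ⟨L, hL⟩ := hcomp.exists_bound_of_continuousOn hf.continuousOn
  let r : ℝ × ℝ → ℝ × ℝ := fun q => (max α (min β q.1), max M (min N q.2))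
  have hr : ∀ q, r q ∈ Icc α β ×ˢ Icc M N := fun q =>
    ⟨⟨le_max_left _ _, max_le hαβ (min_le_left _ _)⟩,
      ⟨le_max_left _ _, max_le hMN (min_le_left _ _)⟩⟩
  have hrL : LipschitzWith (max 1 1) r :=
    ((LipschitzWith.prod_fst.const_min β).const_max α).prodMk
      ((LipschitzWith.prod_snd.const_min N).const_max M)
  refine ⟨f ∘ r, C * max 1 1, L.toNNReal, ?_, fun q => (hL _ (hr q)).trans (Real.le_coe_toNNReal L),
    ?_⟩
  · rw [← lipschitzOnWith_univ] at hrL ⊢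
    exact hC.comp hrL fun q _ => hr q
  · rintro ⟨x, y⟩ ⟨hx, hy⟩
    simp only [mem_Icc] at hx hy
    simp [r, hx.1, hx.2, hy.1, hy.2]

/-- Integral curves of a bounded, globally Lipschitz field exist for all time: the Picard–Lindelöf
theorem applies on every bounded interval, and the solutions agree by uniqueness. -/
lemma exists_global_integralCurve {E : Type*} [NormedAddCommGroup E] [NormedSpace ℝ E]
    [CompleteSpace E] {v : E → E} {C L : ℝ≥0} (hv : LipschitzWith C v) (hL : ∀ q, ‖v q‖ ≤ L)
    (x₀ : E) : ∃ γ : ℝ → E, γ 0 = x₀ ∧ ∀ t, HasDerivAt γ (v (γ t)) t := by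
  have hex : ∀ N : ℕ, ∃ γ : ℝ → E, γ 0 = x₀ ∧
      ∀ t ∈ Ioo (-((N : ℝ) + 1)) (N + 1), HasDerivAt γ (v (γ t)) t := by
    intro N
    have hN : (0 : ℝ) < N + 1 := by positivity
    have hPL : IsPicardLindelof (fun _ => v) (tmin := -((N : ℝ) + 1)) (tmax := N + 1)
        ⟨0, by constructor <;> linarith⟩ x₀ (L * (N + 1)) 0 L C :=
      .of_time_independent (fun q _ => hL q) hv.lipschitzOnWith (by simp)
    obtain ⟨γ, h0, hγ⟩ := hPL.exists_eq_forall_mem_Icc_hasDerivWithinAt₀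
    exact ⟨γ, h0, fun t ht => (hγ t (Ioo_subset_Icc_self ht)).hasDerivAt (Icc_mem_nhds ht.1 ht.2)⟩
  choose γ h0 hγ using hex
  have hagree : ∀ N M : ℕ, N ≤ M → EqOn (γ N) (γ M) (Ioo (-((N : ℝ) + 1)) (N + 1)) := by
    intro N M hNM
    have hNM' : (N : ℝ) ≤ M := by exact_mod_cast hNM
    have hN : (0 : ℝ) < N + 1 := by positivity
    refine ODE_solution_unique_of_mem_Ioo (v := fun _ => v) (s := fun _ => univ) (K := C) (t₀ := 0)
      (fun _ _ => hv.lipschitzOnWith) ⟨by linarith, hN⟩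
      (fun t ht => ⟨hγ N t ht, trivial⟩)
      (fun t ht => ⟨hγ M t ⟨by linarith [ht.1], by linarith [ht.2]⟩, trivial⟩) ?_
    rw [h0, h0]
  have hmem : ∀ t : ℝ, t ∈ Ioo (-((⌈|t|⌉₊ : ℝ) + 1)) (⌈|t|⌉₊ + 1) := fun t =>
    abs_lt.1 (by linarith [Nat.le_ceil |t|])
  have heq : ∀ (N : ℕ), ∀ t ∈ Ioo (-((N : ℝ) + 1)) (N + 1), γ ⌈|t|⌉₊ t = γ N t := by
    intro N t ht
    rcases le_total ⌈|t|⌉₊ N with h | h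
    · exact hagree _ _ h (hmem t)
    · exact (hagree _ _ h ht).symm
  refine ⟨fun t => γ ⌈|t|⌉₊ t, h0 _, fun t => ?_⟩
  exact (hγ _ t (hmem t)).congr_of_eventuallyEq
    (eventually_of_mem (Ioo_mem_nhds (hmem t).1 (hmem t).2) (heq _))

/-! ### The modified curve never leaves the trapping rectangle -/

lemma continuousOn_profileEnergy (n : ℕ) (K : ℝ) :
    ContinuousOn (fun q : ℝ × ℝ => profileEnergy n K q.1 q.2) (Ioo 0 (Real.pi / 2) ×ˢ univ) := by
  unfold profileEnergy
  refine ContinuousOn.sub (ContinuousOn.div (by fun_prop) (by fun_prop) ?_) (by fun_prop)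
  rintro ⟨x, y⟩ ⟨hx, -⟩
  exact (Real.sqrt_pos.2 (radicand_pos hx y)).ne'

/-- An integral curve of a field that agrees with the profile field on the open rectangle `U`, and
for which energy `lam` inside `U` forces the curve into a smaller closed rectangle `B`, stays in `B`:
the set of times with energy `lam` and position in `U` is open since the energy is locally constant
there, and closed since it coincides with the set of times with energy `lam` and position in `B`. -/
lemma trapped_of_modified {n : ℕ} (hn : 1 ≤ n) {K lam : ℝ} {U B : Set (ℝ × ℝ)}
    {v : ℝ × ℝ → ℝ × ℝ} (hU : IsOpen U) (hB : IsClosed B) (hBU : B ⊆ U)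
    (hUI : U ⊆ Ioo 0 (Real.pi / 2) ×ˢ univ) (hv : EqOn v (profileField n K) U)
    (htrap : ∀ q ∈ U, profileEnergy n K q.1 q.2 = lam → q ∈ B)
    {γ : ℝ → ℝ × ℝ} (hγ : ∀ t, HasDerivAt γ (v (γ t)) t) (h0 : γ 0 ∈ U)
    (hE0 : profileEnergy n K (γ 0).1 (γ 0).2 = lam) (t : ℝ) : γ t ∈ B := by
  have hcont : Continuous γ := continuous_iff_continuousAt.2 fun t => (hγ t).continuousAt
  let e : ℝ → ℝ := fun u => profileEnergy n K (γ u).1 (γ u).2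
  have he : ∀ u ∈ γ ⁻¹' U, HasDerivAt e 0 u := by
    intro u hu
    have h := hγ u
    rw [hv hu] at h
    have hx := (hUI hu).1
    exact Eq21.hasDerivAt_energy hn (φ := fun u => (γ u).1) (p := fun u => (γ u).2)
      h.fst h.snd hx ((eq21_iff n K hx _ _).2 rfl)
  have hopen : IsOpen (γ ⁻¹' U ∩ e ⁻¹' {lam}) :=
    (hU.preimage hcont).isOpen_inter_preimage_of_deriv_eq_zero
      (fun u hu => (he u hu).differentiableAt.differentiableWithinAt)
      (fun u hu => (he u hu).deriv) _
  have hEq : γ ⁻¹' U ∩ e ⁻¹' {lam} = γ ⁻¹' B ∩ e ⁻¹' {lam} := by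
    ext u
    exact ⟨fun h => ⟨htrap _ h.1 h.2, h.2⟩, fun h => ⟨hBU h.1, h.2⟩⟩
  have hclosed : IsClosed (γ ⁻¹' U ∩ e ⁻¹' {lam}) := by
    rw [hEq]
    exact ((continuousOn_profileEnergy n K).comp hcont.continuousOn
      (fun u hu => hUI (hBU hu))).preimage_isClosed_of_isClosed (hB.preimage hcont)
      isClosed_singleton
  have huniv := IsClopen.eq_univ ⟨hclosed, hopen⟩ ⟨0, h0, hE0⟩
  have ht : t ∈ γ ⁻¹' U ∩ e ⁻¹' {lam} := huniv ▸ mem_univ t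
  rw [hEq] at ht
  exact ht.1

/-! ### Existence and uniqueness -/

/-- Lemma 3.1: for initial values `(a, b)` whose conserved constant
`λ = sin^{n+1}a·cos²a/√(sin²a·cos²a+b²) − (K/2)sin²a` avoids `[0, −K/2]` (if `K < 0`),
resp. `[−K/2, 0]` (if `K > 0`), there is a unique global C² solution `φ : ℝ → (0, π/2)`
of equation (21) with `φ(0) = a`, `φ'(0) = b`. -/
theorem global_existence_uniqueness_eq21 (n : ℕ) (hn : 2 ≤ n) (K : ℝ) (hK : K ≠ 0)
    (a b : ℝ) (ha : a ∈ Set.Ioo 0 (Real.pi / 2))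
    (lam : ℝ)
    (hlam : lam = Real.sin a ^ (n + 1) * Real.cos a ^ 2 /
        Real.sqrt (Real.sin a ^ 2 * Real.cos a ^ 2 + b ^ 2) - K / 2 * Real.sin a ^ 2)
    (hneg : K < 0 → lam ∉ Set.Icc 0 (-K / 2))
    (hpos : 0 < K → lam ∉ Set.Icc (-K / 2) 0) :
    ∃! φ : ℝ → ℝ, ContDiff ℝ 2 φ ∧ (∀ θ, φ θ ∈ Set.Ioo 0 (Real.pi / 2)) ∧
      (∀ θ, Eq21 n K (φ θ) (deriv φ θ) (deriv (deriv φ) θ)) ∧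
      φ 0 = a ∧ deriv φ 0 = b := by
  obtain ⟨δ, hδ, hgap⟩ := exists_energy_gap ha hK hlam hneg hpos
  have hn1 : 1 ≤ n := by omega
  have htrap : ∀ x y : ℝ, x ∈ Ioo 0 (Real.pi / 2) → profileEnergy n K x y = lam →
      x ∈ Icc δ (Real.pi / 2 - δ) ∧ y ∈ Icc (-(1 / δ)) (1 / δ) := by
    intro x y hx hE
    refine bounds_of_le_energy hn1 hδ hx ?_
    have := hgap x
    rw [← hE, profileEnergy, sub_add_cancel] at this
    exact this
  have hab := htrap a b ha hlam.symm
  have hδ' : 0 < 1 / δ := by positivity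
  have hδπ : δ ≤ Real.pi / 2 - δ := hab.1.1.trans hab.1.2
  -- The field is kept unchanged on a rectangle strictly larger than the trapping one, so that the
  -- trapping rectangle lies in an open set on which the modified and original fields agree.
  obtain ⟨v, C, L, hvC, hvL, hv⟩ := exists_lipschitz_extension
    (f := profileField n K) (α := δ / 2) (β := Real.pi / 2 - δ / 2)
    (M := -(1 / δ + 1)) (N := 1 / δ + 1) (by linarith) (by linarith)
    ((contDiffOn_profileField n K).mono (Set.prod_mono
      (fun x hx => ⟨by linarith [hx.1], by linarith [hx.2]⟩) (subset_univ _)))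
  have hBU : Icc δ (Real.pi / 2 - δ) ×ˢ Icc (-(1 / δ)) (1 / δ) ⊆
      Ioo (δ / 2) (Real.pi / 2 - δ / 2) ×ˢ Ioo (-(1 / δ + 1)) (1 / δ + 1) :=
    Set.prod_mono (fun x hx => ⟨by linarith [hx.1], by linarith [hx.2]⟩)
      (fun x hx => ⟨by linarith [hx.1], by linarith [hx.2]⟩)
  have hUI : Ioo (δ / 2) (Real.pi / 2 - δ / 2) ×ˢ Ioo (-(1 / δ + 1)) (1 / δ + 1) ⊆
      Ioo 0 (Real.pi / 2) ×ˢ univ :=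
    Set.prod_mono (fun x hx => ⟨by linarith [hx.1], by linarith [hx.2]⟩) (subset_univ _)
  have hvU := hv.mono (Set.prod_mono Ioo_subset_Icc_self Ioo_subset_Icc_self)
  obtain ⟨γ, hγ0, hγ⟩ := exists_global_integralCurve hvC hvL (a, b)
  have hγB := trapped_of_modified hn1 (isOpen_Ioo.prod isOpen_Ioo)
    (isClosed_Icc.prod isClosed_Icc) hBU hUI hvU
    (fun q hq hE => htrap q.1 q.2 (hUI hq).1 hE) hγ (by rw [hγ0]; exact hBU hab)
    (by rw [hγ0]; exact hlam.symm)
  have hγI : ∀ t, (γ t).1 ∈ Ioo 0 (Real.pi / 2) := fun t => (hUI (hBU (hγB t))).1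
  have hγ' : ∀ t, HasDerivAt γ (profileField n K (γ t)) t := fun t => by
    rw [← hvU (hBU (hγB t))]; exact hγ t
  have hf1 : ∀ t, HasDerivAt (fun t => (γ t).1) (γ t).2 t := fun t => (hγ' t).fst
  have hf2 : ∀ t, HasDerivAt (fun t => (γ t).2) (profileAccel n K (γ t).1 (γ t).2) t :=
    fun t => (hγ' t).snd
  have hd1 : deriv (fun t => (γ t).1) = fun t => (γ t).2 := funext fun t => (hf1 t).deriv
  have hd2 : deriv (fun t => (γ t).2) = fun t => profileAccel n K (γ t).1 (γ t).2 :=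
    funext fun t => (hf2 t).deriv
  have hcont : Continuous γ := continuous_iff_continuousAt.2 fun t => (hγ t).continuousAt
  refine ⟨fun t => (γ t).1, ⟨?_, hγI, fun t => ?_, by simp [hγ0], by simp [hd1, hγ0]⟩, ?_⟩
  · rw [show (2 : WithTop ℕ∞) = 1 + 1 from rfl, contDiff_succ_iff_deriv]
    refine ⟨fun t => (hf1 t).differentiableAt, by simp, ?_⟩
    rw [hd1, contDiff_one_iff_deriv]
    refine ⟨fun t => (hf2 t).differentiableAt, ?_⟩
    rw [hd2, ← continuousOn_univ]
    exact ((contDiffOn_profileField n K).continuousOn.comp hcont.continuousOn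
      (fun t _ => ⟨hγI t, trivial⟩)).snd
  · rw [hd1, hd2]
    exact (eq21_iff n K (hγI t) _ _).2 rfl
  · rintro ψ ⟨hψ, hψI, hψE, hψ0, hψ1⟩
    rw [show (2 : WithTop ℕ∞) = 1 + 1 from rfl, contDiff_succ_iff_deriv] at hψ
    have h1 : ∀ t, HasDerivAt ψ (deriv ψ t) t := fun t => (hψ.1 t).hasDerivAt
    have h2 : ∀ t, HasDerivAt (deriv ψ) (deriv (deriv ψ) t) t := fun t =>
      (hψ.2.2.differentiable one_ne_zero t).hasDerivAt
    have hE : ∀ t, profileEnergy n K (ψ t) (deriv ψ t) = lam := by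
      have he := fun t => (hψE t).hasDerivAt_energy hn1 (h1 t) (h2 t) (hψI t)
      intro t
      have := is_const_of_deriv_eq_zero (fun t => (he t).differentiableAt)
        (fun t => (he t).deriv) t 0
      simp only [hψ0, hψ1] at this
      rw [this]; exact hlam.symm
    have hcurve : (fun t => (ψ t, deriv ψ t)) = γ := by
      have hψv : ∀ t, HasDerivAt (fun t => (ψ t, deriv ψ t)) (v (ψ t, deriv ψ t)) t := by
        intro t
        have hmem : (ψ t, deriv ψ t) ∈ Icc δ (Real.pi / 2 - δ) ×ˢ Icc (-(1 / δ)) (1 / δ) :=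
          mem_prod.2 (htrap (ψ t) (deriv ψ t) (hψI t) (hE t))
        have hfield : v (ψ t, deriv ψ t) = profileField n K (ψ t, deriv ψ t) := hvU (hBU hmem)
        rw [hfield, profileField, ← (eq21_iff n K (hψI t) _ _).1 (hψE t)]
        exact (h1 t).prodMk (h2 t)
      exact ODE_solution_unique_univ (v := fun _ => v) (s := fun _ => univ) (K := C) (t₀ := 0)
        (fun _ => hvC.lipschitzOnWith) (fun t => ⟨hψv t, trivial⟩) (fun t => ⟨hγ t, trivial⟩)
        (by simp [hψ0, hψ1, hγ0])
    funext t
    rw [← hcurve]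
end

section
/- Let n ≥ 2 be an integer, K ≠ 0 a real constant, a ∈ (0, π/2), b ∈ ℝ, with λ = sin^{n+1}(a)cos²(a)/√(sin²(a)cos²(a)+b²) − (K/2)sin²(a) satisfying λ ∉ [0, −K/2] if K < 0, respectively λ ∉ [−K/2, 0] if K > 0. If φ : ℝ → (0, π/2) is a C² global solution of equation (21) with φ(0) = a, φ'(0) = b, then inf_{θ∈ℝ} sin²(φ(θ))cos²(φ(θ)) > 0, and consequently the length integrand is not integrable: ∫_{−∞}^{∞} √((φ'(θ))² + sin²(φ(θ))cos²(φ(θ))) dθ = +∞. (The solution curve has infinite length in the quotient metric, so the corresponding Hamiltonian-minimal Lagrangian submanifold is complete.) -/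
/-!
The equation `Eq21` has the first integral
`F = sin^{n+1}φ cos²φ / √(sin²φ cos²φ + φ'²) - (K/2) sin²φ` (`firstIntegral_const`), so `F = lam`
along the solution. The first term of `F` lies between `0` and `sin φ cos φ`, hence a small
value of `sin φ cos φ` forces `lam` to be close to `0` (when `sin φ` is small) or to `-K/2`
(when `cos φ` is small). Both are endpoints of the excluded interval, so `sin φ cos φ` is
bounded below by a positive constant (`sin_mul_cos_lower_bound`). The length integrand is then
bounded below by the same constant, and its integral over `ℝ` diverges.
-/

open MeasureTheory

/-- The quantity conserved along solutions of `Eq21`, at position `x` and velocity `p`. -/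
noncomputable def firstIntegral (n : ℕ) (K x p : ℝ) : ℝ :=
  Real.sin x ^ (n + 1) * Real.cos x ^ 2 /
    Real.sqrt (Real.sin x ^ 2 * Real.cos x ^ 2 + p ^ 2) - K / 2 * Real.sin x ^ 2

lemma firstIntegral_const (n : ℕ) (hn : 2 ≤ n) (K : ℝ) (φ : ℝ → ℝ) (hφ : ContDiff ℝ 2 φ)
    (hrange : ∀ θ, φ θ ∈ Set.Ioo 0 (Real.pi / 2))
    (heq : ∀ θ, Eq21 n K (φ θ) (deriv φ θ) (deriv (deriv φ) θ)) (x y : ℝ) :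
    firstIntegral n K (φ x) (deriv φ x) = firstIntegral n K (φ y) (deriv φ y) := by
  have hd1 : ∀ θ, HasDerivAt φ (deriv φ θ) θ := fun θ =>
    (hφ.differentiable (by norm_num) θ).hasDerivAt
  have hd2 : ∀ θ, HasDerivAt (deriv φ) (deriv (deriv φ) θ) θ := fun θ => by
    have h : ContDiff ℝ 1 (deriv φ) :=
      (contDiff_succ_iff_deriv.1 (show ContDiff ℝ (1 + 1) φ by
        rw [one_add_one_eq_two]; exact hφ)).2.2
    exact (h.differentiable (by norm_num) θ).hasDerivAt
  have key : ∀ θ, HasDerivAt (fun t => firstIntegral n K (φ t) (deriv φ t)) 0 θ := by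
    intro θ
    have hE := heq θ
    obtain ⟨h1, h2⟩ := hrange θ
    have hs : 0 < Real.sin (φ θ) := Real.sin_pos_of_pos_of_lt_pi h1 (by linarith [Real.pi_pos])
    have hc : 0 < Real.cos (φ θ) := Real.cos_pos_of_mem_Ioo ⟨by linarith, h2⟩
    have hpos : 0 < Real.sin (φ θ) ^ 2 * Real.cos (φ θ) ^ 2 + deriv φ θ ^ 2 := by positivity
    have hsin := (hd1 θ).sin
    have hcos := (hd1 θ).cos
    have hR := ((((hsin.pow 2).mul (hcos.pow 2)).add ((hd2 θ).pow 2))).sqrt hpos.ne'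
    have hR0 := Real.sqrt_pos.2 hpos
    have hF := ((((hsin.pow (n + 1)).mul (hcos.pow 2)).div hR hR0.ne')).sub
      ((hsin.pow 2).const_mul (K / 2))
    refine hF.congr_deriv ?_
    obtain ⟨m, rfl⟩ : ∃ m, n = m + 1 := ⟨n - 1, by omega⟩
    have hsq := Real.sq_sqrt hpos.le
    unfold Eq21 at hE
    simp only [Pi.add_apply, Pi.mul_apply, Pi.pow_apply, Nat.add_sub_cancel] at hE hsq hR0 ⊢
    rw [← hE]
    generalize Real.sqrt (Real.sin (φ θ) ^ 2 * Real.cos (φ θ) ^ 2 + deriv φ θ ^ 2) = R at *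
    generalize Real.sin (φ θ) = s at *
    generalize Real.cos (φ θ) = c at *
    generalize deriv (deriv φ) θ = q at *
    generalize deriv φ θ = p at *
    push_cast
    field_simp
    rw [hsq]
    ring
  exact is_const_of_deriv_eq_zero (fun θ => (key θ).differentiableAt)
    (fun θ => (key θ).deriv) x y

/-- The product `sin x cos x` controls the distance of the conserved quantity from the
two values `0` and `-K/2` that it takes in the limits `x → 0` and `x → π/2`. -/
lemma sin_mul_cos_lower_bound (n : ℕ) (hn : 2 ≤ n) (K x p : ℝ)
    (hx : x ∈ Set.Ioo 0 (Real.pi / 2)) :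
    min |firstIntegral n K x p| |firstIntegral n K x p + K / 2| / (1 + |K|) ≤
      Real.sin x * Real.cos x := by
  obtain ⟨h1, h2⟩ := hx
  have hs : 0 < Real.sin x := Real.sin_pos_of_pos_of_lt_pi h1 (by linarith [Real.pi_pos])
  have hc : 0 < Real.cos x := Real.cos_pos_of_mem_Ioo ⟨by linarith, h2⟩
  have hsc := Real.sin_sq_add_cos_sq x
  have hs1 := Real.sin_le_one x
  have hRle : Real.sin x * Real.cos x ≤
      Real.sqrt (Real.sin x ^ 2 * Real.cos x ^ 2 + p ^ 2) :=
    Real.le_sqrt_of_sq_le (by nlinarith [sq_nonneg p])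
  unfold firstIntegral
  generalize Real.sqrt (Real.sin x ^ 2 * Real.cos x ^ 2 + p ^ 2) = R at *
  generalize Real.sin x = s at *
  generalize Real.cos x = c at *
  have ht : 0 < s * c := mul_pos hs hc
  have hR : 0 < R := ht.trans_le hRle
  have hG0 : 0 ≤ s ^ (n + 1) * c ^ 2 / R := by positivity
  have hG1 : s ^ (n + 1) * c ^ 2 / R ≤ s * c := by
    rw [div_le_iff₀ hR]
    have h3 : s ^ (n + 1) ≤ s ^ 2 := pow_le_pow_of_le_one hs.le hs1 (by omega)
    nlinarith [mul_le_mul_of_nonneg_right h3 (sq_nonneg c), mul_le_mul_of_nonneg_left hRle ht.le]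
  generalize s ^ (n + 1) * c ^ 2 / R = G at *
  have ht1 : s * c ≤ 1 / 2 := by nlinarith [sq_nonneg (s - c)]
  have hKK := abs_nonneg K
  rw [div_le_iff₀ (by positivity)]
  rcases le_total (s ^ 2) (1 / 2) with h | h
  · refine (min_le_left _ _).trans ?_
    -- here `cos² ≥ 1/2`, so `sin² ≤ 2 (sin cos)² ≤ sin cos`
    have h4 : s ^ 2 ≤ s * c := by
      nlinarith [pow_le_pow_left₀ ht.le ht1 2, mul_pos ht ht]
    have h5 : |K / 2 * s ^ 2| ≤ |K| * (s * c) := by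
      rw [abs_mul, abs_div, abs_of_nonneg (sq_nonneg s), abs_two]
      nlinarith [mul_le_mul_of_nonneg_left h4 hKK, mul_nonneg hKK (sq_nonneg s)]
    have h6 := abs_sub G (K / 2 * s ^ 2)
    rw [abs_of_nonneg hG0] at h6
    linarith
  · refine (min_le_right _ _).trans ?_
    have h4 : c ^ 2 ≤ s * c := by
      nlinarith
    have h5 : |K / 2 * c ^ 2| ≤ |K| * (s * c) := by
      rw [abs_mul, abs_div, abs_of_nonneg (sq_nonneg c), abs_two]
      nlinarith [mul_le_mul_of_nonneg_left h4 hKK, mul_nonneg hKK (sq_nonneg c)]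
    have h6 := abs_add_le G (K / 2 * c ^ 2)
    rw [abs_of_nonneg hG0] at h6
    have h7 : G - K / 2 * s ^ 2 + K / 2 = G + K / 2 * c ^ 2 := by
      linear_combination (-K / 2) * hsc
    rw [h7]
    linarith

/-- For a global solution of (21) with conserved constant `λ` avoiding `[0, −K/2]`
(if `K < 0`), resp. `[−K/2, 0]` (if `K > 0`), the quantity `sin²φ·cos²φ` has positive
infimum along the solution, and consequently the solution curve has infinite length:
`∫_{−∞}^{∞} √(φ'² + sin²φ·cos²φ) dθ = +∞`. -/
theorem eq21_solution_infinite_length (n : ℕ) (hn : 2 ≤ n) (K : ℝ) (hK : K ≠ 0)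
    (a b : ℝ) (ha : a ∈ Set.Ioo 0 (Real.pi / 2))
    (lam : ℝ)
    (hlam : lam = Real.sin a ^ (n + 1) * Real.cos a ^ 2 /
        Real.sqrt (Real.sin a ^ 2 * Real.cos a ^ 2 + b ^ 2) - K / 2 * Real.sin a ^ 2)
    (hneg : K < 0 → lam ∉ Set.Icc 0 (-K / 2))
    (hpos : 0 < K → lam ∉ Set.Icc (-K / 2) 0)
    (φ : ℝ → ℝ) (hφ : ContDiff ℝ 2 φ) (hrange : ∀ θ, φ θ ∈ Set.Ioo 0 (Real.pi / 2))
    (heq : ∀ θ, Eq21 n K (φ θ) (deriv φ θ) (deriv (deriv φ) θ))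
    (h0 : φ 0 = a) (h0' : deriv φ 0 = b) :
    (0 < ⨅ θ : ℝ, Real.sin (φ θ) ^ 2 * Real.cos (φ θ) ^ 2) ∧
      ∫⁻ θ : ℝ, ENNReal.ofReal
        (Real.sqrt ((deriv φ θ) ^ 2 + Real.sin (φ θ) ^ 2 * Real.cos (φ θ) ^ 2)) = ⊤ := by
  have hF : ∀ θ, firstIntegral n K (φ θ) (deriv φ θ) = lam := fun θ => by
    rw [firstIntegral_const n hn K φ hφ hrange heq θ 0, h0, h0', hlam, firstIntegral]
  have hl : lam ≠ 0 ∧ lam + K / 2 ≠ 0 := by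
    rcases lt_or_gt_of_ne hK with h | h
    · exact ⟨fun e => hneg h ⟨by linarith, by linarith⟩,
        fun e => hneg h ⟨by linarith, by linarith⟩⟩
    · exact ⟨fun e => hpos h ⟨by linarith, by linarith⟩,
        fun e => hpos h ⟨by linarith, by linarith⟩⟩
  obtain ⟨δ, hδ, hb⟩ : ∃ δ : ℝ, 0 < δ ∧ ∀ θ, δ ≤ Real.sin (φ θ) * Real.cos (φ θ) := by
    refine ⟨min |lam| |lam + K / 2| / (1 + |K|), ?_, fun θ => ?_⟩
    · have := lt_min (abs_pos.2 hl.1) (abs_pos.2 hl.2)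
      positivity
    · rw [← hF θ]
      exact sin_mul_cos_lower_bound n hn K _ _ (hrange θ)
  have hb2 : ∀ θ, δ ^ 2 ≤ Real.sin (φ θ) ^ 2 * Real.cos (φ θ) ^ 2 := fun θ => by
    rw [← mul_pow]
    exact pow_le_pow_left₀ hδ.le (hb θ) 2
  refine ⟨(pow_pos hδ 2).trans_le (le_ciInf hb2), ?_⟩
  have hle : ∫⁻ _ : ℝ, ENNReal.ofReal δ ≤ ∫⁻ θ : ℝ, ENNReal.ofReal
      (Real.sqrt ((deriv φ θ) ^ 2 + Real.sin (φ θ) ^ 2 * Real.cos (φ θ) ^ 2)) :=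
    lintegral_mono fun θ => ENNReal.ofReal_le_ofReal
      (Real.le_sqrt_of_sq_le (by nlinarith [hb2 θ, sq_nonneg (deriv φ θ)]))
  rw [lintegral_const, Real.volume_univ, ENNReal.mul_top (by simpa using hδ)] at hle
  exact top_le_iff.1 hle
end

section
/- Let n ≥ 2 be an integer and K a real constant. Suppose φ : ℝ → (0, π/2) is a C² solution of equation (21) on ℝ with φ'(0) = 0, and suppose there exists Ω > 0 with φ'(Ω) = 0. Then φ is even (φ(−θ) = φ(θ) for all θ) and periodic with period 2Ω (φ(θ + 2Ω) = φ(θ) for all θ ∈ ℝ). (Reflecting at the critical points produces a global periodic solution; this is the mechanism producing the closed Hamiltonian-minimal Lagrangian submanifolds of Theorem 3.3.) -/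
open Set Filter Topology

/-- Two global integral curves of an autonomous vector field that is `C¹` along the first one agree
everywhere as soon as they agree at one time: the set of times where they coincide is clopen. -/
lemma ode_unique_global {E : Type*} [NormedAddCommGroup E] [NormedSpace ℝ E]
    {v : E → E} {z w : ℝ → E} (hv : ∀ t, ContDiffAt ℝ 1 v (z t))
    (hz : ∀ t, HasDerivAt z (v (z t)) t) (hw : ∀ t, HasDerivAt w (v (w t)) t)
    {t₀ : ℝ} (h : z t₀ = w t₀) : z = w := by
  have hzc : Continuous z := continuous_iff_continuousAt.2 fun t => (hz t).continuousAt
  have hwc : Continuous w := continuous_iff_continuousAt.2 fun t => (hw t).continuousAt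
  have hclopen : IsClopen {t | z t = w t} := by
    refine ⟨isClosed_eq hzc hwc, isOpen_iff_mem_nhds.2 fun t ht => ?_⟩
    obtain ⟨L, s, hs, hL⟩ := (hv t).exists_lipschitzOnWith
    have hs' : s ∈ 𝓝 (w t) := by
      rw [← show z t = w t from ht]
      exact hs
    exact ODE_solution_unique_of_eventually (v := fun _ => v) (s := fun _ => s)
      (Eventually.of_forall fun _ => hL)
      ((hzc.continuousAt.eventually_mem hs).mono fun τ hτ => ⟨hz τ, hτ⟩)
      ((hwc.continuousAt.eventually_mem hs').mono fun τ hτ => ⟨hw τ, hτ⟩) ht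
  have huniv := hclopen.eq_univ ⟨t₀, h⟩
  funext t
  have ht : t ∈ {t | z t = w t} := huniv ▸ mem_univ t
  exact ht

/-- A solution of `f'' = F (f, f')` with `F` even in the velocity is symmetric about each of its
critical points. -/
lemma reflection_of_deriv_eq_zero {F : ℝ × ℝ → ℝ} {f : ℝ → ℝ}
    (hF : ∀ t, ContDiffAt ℝ 1 F (f t, deriv f t)) (hFeven : ∀ x y, F (x, -y) = F (x, y))
    (hf : ∀ t, HasDerivAt f (deriv f t) t)
    (hf' : ∀ t, HasDerivAt (deriv f) (F (f t, deriv f t)) t)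
    {c : ℝ} (hc : deriv f c = 0) (t : ℝ) : f (2 * c - t) = f t := by
  have hlin : ∀ t, HasDerivAt (fun τ : ℝ => 2 * c - τ) (-1) t := fun t => by
    simpa using (hasDerivAt_id t).const_sub (2 * c)
  have key : (fun τ => (f τ, deriv f τ)) =
      fun τ => (f (2 * c - τ), -deriv f (2 * c - τ)) := by
    refine ode_unique_global (v := fun p : ℝ × ℝ => (p.2, F p)) (t₀ := c)
      (fun τ => contDiffAt_snd.prodMk (hF τ)) (fun τ => (hf τ).prodMk (hf' τ)) (fun τ => ?_) ?_
    · refine HasDerivAt.prodMk ?_ ?_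
      · simpa [Function.comp_def] using (hf (2 * c - τ)).comp τ (hlin τ)
      · rw [hFeven]
        simpa [Function.comp_def] using ((hf' (2 * c - τ)).comp τ (hlin τ)).fun_neg
    · have : 2 * c - c = c := by ring
      simp [this, hc]
  exact (congrArg Prod.fst (congrFun key t)).symm

/-- The value of `φ''` that `Eq21` prescribes at `(φ, φ') = p`. -/
noncomputable def eq21Accel (n : ℕ) (K : ℝ) (p : ℝ × ℝ) : ℝ :=
  ((((n : ℝ) + 1) * Real.cos p.1 ^ 2 - 2 * Real.sin p.1 ^ 2) * p.2 ^ 2 +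
      Real.sin p.1 ^ 2 * Real.cos p.1 ^ 2 * ((n : ℝ) * Real.cos p.1 ^ 2 - Real.sin p.1 ^ 2) -
      K * Real.sqrt (Real.sin p.1 ^ 2 * Real.cos p.1 ^ 2 + p.2 ^ 2) ^ 3 /
        Real.sin p.1 ^ (n - 1)) / (Real.sin p.1 * Real.cos p.1)

lemma sin_pos_cos_pos {x : ℝ} (hx : x ∈ Ioo 0 (Real.pi / 2)) :
    0 < Real.sin x ∧ 0 < Real.cos x :=
  ⟨Real.sin_pos_of_pos_of_lt_pi hx.1 (by linarith [hx.2, Real.pi_pos]),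
    Real.cos_pos_of_mem_Ioo ⟨by linarith [hx.1, Real.pi_pos], hx.2⟩⟩

lemma eq21Accel_even (n : ℕ) (K x y : ℝ) : eq21Accel n K (x, -y) = eq21Accel n K (x, y) := by
  simp [eq21Accel]

lemma Eq21.eq_accel {n : ℕ} {K x y a : ℝ} (hx : x ∈ Ioo 0 (Real.pi / 2))
    (h : Eq21 n K x y a) : a = eq21Accel n K (x, y) := by
  obtain ⟨hs, hc⟩ := sin_pos_cos_pos hx
  have hq : 0 < Real.sqrt (Real.sin x ^ 2 * Real.cos x ^ 2 + y ^ 2) :=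
    Real.sqrt_pos.2 (by positivity)
  simp only [Eq21] at h
  simp only [eq21Accel]
  generalize Real.sqrt (Real.sin x ^ 2 * Real.cos x ^ 2 + y ^ 2) = q at *
  have hS : Real.sin x ^ (n - 1) ≠ 0 := by positivity
  generalize Real.sin x ^ (n - 1) = S at *
  rw [← h]
  field_simp
  ring

lemma contDiffAt_eq21Accel (n : ℕ) (K : ℝ) {p : ℝ × ℝ} (hp : p.1 ∈ Ioo 0 (Real.pi / 2)) :
    ContDiffAt ℝ 1 (eq21Accel n K) p := by
  obtain ⟨hs, hc⟩ := sin_pos_cos_pos hp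
  have hq : Real.sin p.1 ^ 2 * Real.cos p.1 ^ 2 + p.2 ^ 2 ≠ 0 := by positivity
  have hsin : ContDiffAt ℝ 1 (fun p : ℝ × ℝ => Real.sin p.1) p := by fun_prop
  have hcos : ContDiffAt ℝ 1 (fun p : ℝ × ℝ => Real.cos p.1) p := by fun_prop
  have hsqrt : ContDiffAt ℝ 1
      (fun p : ℝ × ℝ => Real.sqrt (Real.sin p.1 ^ 2 * Real.cos p.1 ^ 2 + p.2 ^ 2)) p :=
    ContDiffAt.sqrt (by fun_prop) hq
  unfold eq21Accel
  refine ContDiffAt.div (ContDiffAt.sub (by fun_prop) (ContDiffAt.div ?_ ?_ ?_)) ?_ ?_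
  · exact contDiffAt_const.mul (hsqrt.pow 3)
  · exact hsin.pow _
  · positivity
  · exact hsin.mul hcos
  · positivity

/-- Reflecting at critical points produces a global periodic solution: if a global C²
solution `φ : ℝ → (0, π/2)` of equation (21) has `φ'(0) = 0` and `φ'(Ω) = 0` for some
`Ω > 0`, then `φ` is even and periodic with period `2Ω`. -/
theorem eq21_reflection_periodic (n : ℕ) (hn : 2 ≤ n) (K : ℝ) (φ : ℝ → ℝ)
    (hφ : ContDiff ℝ 2 φ) (hrange : ∀ θ, φ θ ∈ Set.Ioo 0 (Real.pi / 2))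
    (heq : ∀ θ, Eq21 n K (φ θ) (deriv φ θ) (deriv (deriv φ) θ))
    (h0 : deriv φ 0 = 0) (Ω : ℝ) (hΩ : 0 < Ω) (hΩ' : deriv φ Ω = 0) :
    (∀ θ, φ (-θ) = φ θ) ∧ ∀ θ, φ (θ + 2 * Ω) = φ θ := by
  obtain ⟨hd, -, hd'⟩ := contDiff_succ_iff_deriv.1 (show ContDiff ℝ (1 + 1) φ from hφ)
  have hrefl : ∀ c, deriv φ c = 0 → ∀ θ, φ (2 * c - θ) = φ θ := fun c hc =>
    reflection_of_deriv_eq_zero (F := eq21Accel n K)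
      (fun t => contDiffAt_eq21Accel n K (hrange t)) (eq21Accel_even n K)
      (fun t => (hd t).hasDerivAt)
      (fun t => by
        rw [← (heq t).eq_accel (hrange t)]
        exact (hd'.differentiable one_ne_zero t).hasDerivAt) hc
  have heven : ∀ θ, φ (-θ) = φ θ := fun θ => by simpa using hrefl 0 h0 θ
  refine ⟨heven, fun θ => ?_⟩
  rw [← heven θ, ← hrefl Ω hΩ' (-θ)]
  congr 1
  ring
end

section
/- Let n ≥ 2 be an integer and K a real constant. If r is a C² function on an interval I ⊆ ℝ with values in (0, ∞) satisfying equation (44) on I, then the function θ ↦ r(θ)^{n+2} / √(r(θ)² + (r'(θ))²) − (K/2)·r(θ)² is constant on I. (This is the conservation law (48): the Hamiltonian obtained by Legendre transform is a constant of the motion.) -/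
/-!
The derivative of `F = r^{n+2}/w − (K/2) r²`, where `w = √(r² + r'²)`, is
`r^{n+1} r' · ((n+2)/w − r (r + r'')/w³ − K/rⁿ)`.
Substituting the equation for `K/rⁿ` turns the bracket into `2/w − 2 (r² + r'²)/w³ = 0`,
so the mean value inequality on the convex set `I` shows that `F` is constant.
-/

/-- Equation (44) of the paper: the Hamiltonian-minimal equation for the profile curve
`r = r(θ)` of an `SO(n+1)`-invariant Lagrangian submanifold of `ℂ^{n+1}`, written
pointwise in terms of the values `r, r', r''`. -/
def Eq44 (n : ℕ) (K r r' r'' : ℝ) : Prop :=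
  (-(r * r'') + 2 * r' ^ 2 + r ^ 2) / Real.sqrt (r ^ 2 + r' ^ 2) ^ 3 +
      (n : ℝ) / Real.sqrt (r ^ 2 + r' ^ 2) = K / r ^ n

/-- The two-sided derivative of the conserved quantity vanishes at any point where the
equation holds. -/
theorem hasDerivAt_firstIntegral_zero (n : ℕ) (K : ℝ) (r r' : ℝ → ℝ) (q θ : ℝ)
    (h1 : HasDerivAt r (r' θ) θ) (h2 : HasDerivAt r' q θ) (hpos : 0 < r θ)
    (heq : Eq44 n K (r θ) (r' θ) q) :
    HasDerivAt (fun t => r t ^ (n + 2) / Real.sqrt (r t ^ 2 + r' t ^ 2) - K / 2 * r t ^ 2)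
      0 θ := by
  have hs : 0 < r θ ^ 2 + r' θ ^ 2 := by positivity
  have hF := ((h1.fun_pow (n + 2)).fun_div (((h1.fun_pow 2).fun_add (h2.fun_pow 2)).sqrt hs.ne')
    (Real.sqrt_pos.2 hs).ne').fun_sub ((h1.fun_pow 2).const_mul (K / 2))
  refine hF.congr_deriv ?_
  unfold Eq44 at heq
  have hw := Real.sqrt_pos.2 hs
  have hsq := Real.sq_sqrt hs.le
  set w := Real.sqrt (r θ ^ 2 + r' θ ^ 2)
  generalize r θ = x at *
  generalize r' θ = p at *
  have hK : K = x ^ n * ((-(x * q) + 2 * p ^ 2 + x ^ 2) / w ^ 3 + n / w) := by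
    rw [heq]
    field_simp
  rw [hK]
  simp only [show n + 2 - 1 = n + 1 from rfl]
  push_cast
  field_simp
  linear_combination 2 * p * x * x ^ n * hsq

/-- The conservation law (48): along any C² solution of equation (44) on an interval `I`
with positive values, the quantity `r^{n+2}/√(r² + r'²) − (K/2)·r²` is constant. -/
theorem eq44_first_integral (n : ℕ) (hn : 2 ≤ n) (K : ℝ) (I : Set ℝ)
    (hI : I.OrdConnected) (r r' r'' : ℝ → ℝ)
    (hd1 : ∀ θ ∈ I, HasDerivAt r (r' θ) θ)
    (hd2 : ∀ θ ∈ I, HasDerivAt r' (r'' θ) θ)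
    (hcont : ContinuousOn r'' I)
    (hpos : ∀ θ ∈ I, 0 < r θ)
    (heq : ∀ θ ∈ I, Eq44 n K (r θ) (r' θ) (r'' θ)) :
    ∀ θ₁ ∈ I, ∀ θ₂ ∈ I,
      r θ₁ ^ (n + 2) / Real.sqrt (r θ₁ ^ 2 + r' θ₁ ^ 2) - K / 2 * r θ₁ ^ 2 =
        r θ₂ ^ (n + 2) / Real.sqrt (r θ₂ ^ 2 + r' θ₂ ^ 2) - K / 2 * r θ₂ ^ 2 := by
  intro a ha b hb
  have h := hI.convex.norm_image_sub_le_of_norm_hasDerivWithin_le (C := 0) (f' := fun _ => 0)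
    (fun θ hθ => (hasDerivAt_firstIntegral_zero n K r r' (r'' θ) θ (hd1 θ hθ) (hd2 θ hθ)
      (hpos θ hθ) (heq θ hθ)).hasDerivWithinAt) (by simp) hb ha
  rw [zero_mul] at h
  exact sub_eq_zero.1 (norm_le_zero_iff.1 h)
end

section
/- (Lemma 4.2) Let n ≥ 2 be an integer and K a real constant. If r : ℝ → (0, ∞) is a C² function satisfying equation (44) on ℝ and r is periodic (there exists T > 0 with r(θ + T) = r(θ) for all θ ∈ ℝ), then K > 0 and r is the constant function r ≡ (K/(n+1))^{1/(n−1)}. -/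
/-- Conservation of the first integral of `Eq44`, at a single point. -/
lemma Eq44.hasDerivAt_energy {n : ℕ} {K : ℝ} {r r' : ℝ → ℝ} {r'' θ : ℝ}
    (hpos : 0 < r θ) (h1 : HasDerivAt r (r' θ) θ) (h2 : HasDerivAt r' r'' θ)
    (h : Eq44 n K (r θ) (r' θ) r'') :
    HasDerivAt (fun t => r t ^ (n + 2) / Real.sqrt (r t ^ 2 + r' t ^ 2) - K / 2 * r t ^ 2) 0 θ := by
  have hq : 0 < r θ ^ 2 + r' θ ^ 2 := by positivity
  have hw : 0 < Real.sqrt (r θ ^ 2 + r' θ ^ 2) := Real.sqrt_pos.2 hq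
  have hws : Real.sqrt (r θ ^ 2 + r' θ ^ 2) ^ 2 = r θ ^ 2 + r' θ ^ 2 := Real.sq_sqrt hq.le
  have hd := ((h1.pow (n + 2)).div (((h1.pow 2).add (h2.pow 2)).sqrt hq.ne') hw.ne').sub
    ((h1.pow 2).const_mul (K / 2))
  refine hd.congr_deriv ?_
  unfold Eq44 at h
  simp only [Pi.add_apply, Pi.pow_apply]
  generalize Real.sqrt (r θ ^ 2 + r' θ ^ 2) = w at *
  have hK : K = r θ ^ n * ((-(r θ * r'') + 2 * r' θ ^ 2 + r θ ^ 2) / w ^ 3 + (n : ℝ) / w) := by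
    rw [h]
    field_simp
  rw [hK]
  push_cast
  field_simp
  ring_nf
  have hr' : r' θ ^ 2 = w ^ 2 - r θ ^ 2 := by linarith
  have hr3 : r' θ ^ 3 = r' θ * (w ^ 2 - r θ ^ 2) := by rw [← hr']; ring
  simp only [hr3]
  ring

/-- Strict midpoint convexity of `xⁿ⁺¹ - K x² / 2` as a function of `x²`: the midpoint of `a²` and
`b²` is `m²`. -/
lemma potential_rms_lt {n : ℕ} (hn : 2 ≤ n) (K : ℝ) {a b m : ℝ} (ha : 0 < a) (hab : a < b)
    (hm : 0 < m) (hm2 : m ^ 2 = (a ^ 2 + b ^ 2) / 2) :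
    m ^ (n + 1) - K / 2 * m ^ 2 <
      ((a ^ (n + 1) - K / 2 * a ^ 2) + (b ^ (n + 1) - K / 2 * b ^ 2)) / 2 := by
  have hp : (1 : ℝ) < ((n : ℝ) + 1) / 2 := by
    have : (2 : ℝ) ≤ n := by exact_mod_cast hn
    linarith
  have key : ∀ x : ℝ, 0 < x → (x ^ 2) ^ (((n : ℝ) + 1) / 2) = x ^ (n + 1) := by
    intro x hx
    rw [← Real.rpow_natCast x 2, ← Real.rpow_mul hx.le, ← Real.rpow_natCast x (n + 1)]
    congr 1
    push_cast
    ring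
  have hne : a ^ 2 ≠ b ^ 2 := by nlinarith
  have := (strictConvexOn_rpow hp).2 (Set.mem_Ici.2 (sq_nonneg a)) (Set.mem_Ici.2 (sq_nonneg b))
    hne (show (0 : ℝ) < 1 / 2 by norm_num) (show (0 : ℝ) < 1 / 2 by norm_num) (by norm_num)
  simp only [smul_eq_mul] at this
  rw [show 1 / 2 * a ^ 2 + 1 / 2 * b ^ 2 = m ^ 2 by linarith, key a ha, key b (ha.trans hab),
    key m hm] at this
  rw [hm2]
  linarith

/-- Lemma 4.2: the only periodic positive global C² solution of equation (44) is the
constant solution `r ≡ (K/(n+1))^{1/(n−1)}`; in particular this forces `K > 0`. -/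
theorem eq44_periodic_implies_constant (n : ℕ) (hn : 2 ≤ n) (K : ℝ) (r : ℝ → ℝ)
    (hr : ContDiff ℝ 2 r) (hpos : ∀ θ, 0 < r θ)
    (heq : ∀ θ, Eq44 n K (r θ) (deriv r θ) (deriv (deriv r) θ))
    (T : ℝ) (hT : 0 < T) (hper : ∀ θ, r (θ + T) = r θ) :
    0 < K ∧ ∀ θ, r θ = (K / ((n : ℝ) + 1)) ^ ((1 : ℝ) / ((n : ℝ) - 1)) := by
  have hdr : ∀ θ, HasDerivAt r (deriv r θ) θ := fun θ =>
    (hr.differentiable (by norm_num) θ).hasDerivAt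
  have hr1 : ContDiff ℝ 1 (deriv r) := ((contDiff_succ_iff_deriv (n := 1)).1 hr).2.2
  have hdr2 : ∀ θ, HasDerivAt (deriv r) (deriv (deriv r) θ) θ := fun θ =>
    (hr1.differentiable (by norm_num) θ).hasDerivAt
  have hE := fun θ => Eq44.hasDerivAt_energy (hpos θ) (hdr θ) (hdr2 θ) (heq θ)
  obtain ⟨C, hC⟩ : ∃ C, ∀ θ,
      r θ ^ (n + 2) / Real.sqrt (r θ ^ 2 + deriv r θ ^ 2) - K / 2 * r θ ^ 2 = C :=
    ⟨_, fun θ => is_const_of_deriv_eq_zero (fun t => (hE t).differentiableAt)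
      (fun t => (hE t).deriv) θ 0⟩
  have hle : ∀ θ, C ≤ r θ ^ (n + 1) - K / 2 * r θ ^ 2 := by
    intro θ
    rw [← hC θ]
    have hw : r θ ≤ Real.sqrt (r θ ^ 2 + deriv r θ ^ 2) :=
      Real.le_sqrt_of_sq_le (by nlinarith [sq_nonneg (deriv r θ)])
    have : r θ ^ (n + 2) / Real.sqrt (r θ ^ 2 + deriv r θ ^ 2) ≤ r θ ^ (n + 1) := by
      rw [div_le_iff₀ ((hpos θ).trans_le hw), pow_succ]
      exact mul_le_mul_of_nonneg_left hw (pow_pos (hpos θ) _).le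
    linarith
  have hcrit : ∀ θ, deriv r θ = 0 → r θ ^ (n + 1) - K / 2 * r θ ^ 2 = C := by
    intro θ h0
    rw [← hC θ, h0, zero_pow two_ne_zero, add_zero, Real.sqrt_sq (hpos θ).le, pow_succ _ (n + 1),
      mul_div_cancel_right₀ _ (hpos θ).ne']
  have hcomp : IsCompact (Set.range r) :=
    Function.Periodic.compact_of_continuous hper hT.ne' hr.continuous
  obtain ⟨_, ⟨⟨α, rfl⟩, hα⟩⟩ := hcomp.exists_isLeast (Set.range_nonempty r)
  obtain ⟨_, ⟨⟨β, rfl⟩, hβ⟩⟩ := hcomp.exists_isGreatest (Set.range_nonempty r)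
  replace hα : ∀ θ, r α ≤ r θ := fun θ => hα ⟨θ, rfl⟩
  replace hβ : ∀ θ, r θ ≤ r β := fun θ => hβ ⟨θ, rfl⟩
  have hCα := hcrit α (IsLocalMin.deriv_eq_zero (Filter.Eventually.of_forall hα))
  have hCβ := hcrit β (IsLocalMax.deriv_eq_zero (Filter.Eventually.of_forall hβ))
  have hba : r β ≤ r α := by
    by_contra! hab
    have ha := hpos α
    have hmpos : 0 < Real.sqrt ((r α ^ 2 + r β ^ 2) / 2) := Real.sqrt_pos.2 (by positivity)
    have hm2 : Real.sqrt ((r α ^ 2 + r β ^ 2) / 2) ^ 2 = (r α ^ 2 + r β ^ 2) / 2 :=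
      Real.sq_sqrt (by positivity)
    obtain ⟨γ, hγ⟩ : Real.sqrt ((r α ^ 2 + r β ^ 2) / 2) ∈ Set.range r :=
      mem_range_of_exists_le_of_exists_ge hr.continuous
        ⟨α, Real.le_sqrt_of_sq_le (by nlinarith)⟩
        ⟨β, Real.sqrt_le_iff.2 ⟨(hpos β).le, by nlinarith⟩⟩
    have := potential_rms_lt hn K ha hab hmpos hm2
    rw [← hγ] at this
    linarith [hle γ]
  have hconst : ∀ θ, r θ = r α := fun θ => le_antisymm ((hβ θ).trans hba) (hα θ)
  have hfun : r = fun _ => r α := funext hconst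
  have hc := hpos α
  have hd0 : deriv r = fun _ => 0 := by
    rw [hfun]
    funext t
    exact deriv_const t _
  have h := heq α
  unfold Eq44 at h
  simp only [hd0, deriv_const, zero_pow two_ne_zero, mul_zero, add_zero, neg_zero, zero_add,
    Real.sqrt_sq hc.le] at h
  obtain ⟨k, rfl⟩ : ∃ k, n = k + 1 := ⟨n - 1, by omega⟩
  have hk : (0 : ℝ) < k := by
    have : 0 < k := by omega
    exact_mod_cast this
  have hKeq : K = (((k + 1 : ℕ) : ℝ) + 1) * r α ^ k := by
    rw [eq_div_iff (pow_pos hc _).ne'] at h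
    rw [← h]
    field_simp
    ring
  refine ⟨by rw [hKeq]; positivity, fun θ => ?_⟩
  rw [hconst θ, hKeq, mul_div_cancel_left₀ _ (by positivity),
    show ((k + 1 : ℕ) : ℝ) - 1 = k by push_cast; ring, one_div,
    Real.pow_rpow_inv_natCast hc.le (by exact_mod_cast hk.ne')]
end

section
/- Let n ≥ 2 be an integer and K > 0 a real constant. Let a > 0 satisfy a^{n−1} > K/(n+1) and a^{n−1} ≠ K/2. Then there exist θ_max ∈ (0, ∞) and a C² function r : [0, θ_max) → (0, ∞) satisfying equation (44) on (0, θ_max) with r(0) = a and r'(0) = 0, such that r is strictly increasing on (0, θ_max) and r(θ) → +∞ as θ → θ_max⁻. (The solution blows up at finite angle θ_max; reflecting across θ = 0 gives the complete non-trivial Hamiltonian-minimal immersions of ℝ × Sⁿ into ℂ^{n+1} of Theorem 4.3(ii).) -/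
/-- A function with positive derivative on an open interval has an inverse there, differentiable
on the image. -/
lemma exists_inverse_of_deriv_pos (s : Set ℝ) (hs : IsOpen s) (hc : s.OrdConnected)
    (f f' : ℝ → ℝ) (hf : ∀ x ∈ s, HasDerivAt f (f' x) x) (hpos : ∀ x ∈ s, 0 < f' x) :
    StrictMonoOn f s ∧ ∃ g : ℝ → ℝ, (∀ x ∈ s, g (f x) = x) ∧
      ∀ x ∈ s, HasDerivAt g (f' x)⁻¹ (f x) := by
  have hcont : ContinuousOn f s := fun x hx => (hf x hx).continuousAt.continuousWithinAt
  have hmono : StrictMonoOn f s := by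
    refine strictMonoOn_of_deriv_pos hc.convex hcont fun x hx => ?_
    have hx := interior_subset hx
    rw [(hf x hx).deriv]
    exact hpos x hx
  have hleft : ∀ x ∈ s, Function.invFunOn f s (f x) = x :=
    fun x hx => hmono.injOn.leftInvOn_invFunOn hx
  refine ⟨hmono, Function.invFunOn f s, hleft, fun x hx => ?_⟩
  have hnhds : f '' s ∈ nhds (f x) := by
    obtain ⟨ε, hε, hball⟩ := Metric.isOpen_iff.1 hs x hx
    have h1 : x - ε / 2 ∈ s := hball (by
      rw [Metric.mem_ball, Real.dist_eq, abs_lt]; constructor <;> linarith)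
    have h2 : x + ε / 2 ∈ s := hball (by
      rw [Metric.mem_ball, Real.dist_eq, abs_lt]; constructor <;> linarith)
    have hsub : Set.Icc (x - ε / 2) (x + ε / 2) ⊆ s := hc.out h1 h2
    refine Filter.mem_of_superset
      (Icc_mem_nhds (hmono h1 hx (by linarith)) (hmono hx h2 (by linarith))) ?_
    exact (intermediate_value_Icc (by linarith) (hcont.mono hsub)).trans (Set.image_mono hsub)
  have hginv : ∀ y ∈ f '' s, f (Function.invFunOn f s y) = y := by
    rintro _ ⟨z, hz, rfl⟩
    rw [hleft z hz]
  have hgmono : StrictMonoOn (Function.invFunOn f s) (f '' s) := by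
    rintro _ ⟨y, hy, rfl⟩ _ ⟨z, hz, rfl⟩ hyz
    rw [hleft y hy, hleft z hz]
    exact (hmono.lt_iff_lt hy hz).1 hyz
  have hgimg : Function.invFunOn f s '' (f '' s) ∈ nhds (Function.invFunOn f s (f x)) := by
    rw [hleft x hx]
    exact Filter.mem_of_superset (hs.mem_nhds hx) fun z hz => ⟨f z, ⟨z, hz, rfl⟩, hleft z hz⟩
  have hgcont : ContinuousAt (Function.invFunOn f s) (f x) :=
    hgmono.continuousAt_of_image_mem_nhds hnhds hgimg
  refine HasDerivAt.of_local_left_inverse hgcont ?_ (hpos x hx).ne'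
    (Filter.mem_of_superset hnhds hginv)
  rw [hleft x hx]
  exact hf x hx

/-- The radius as a function of the angle `ψ` between the position vector and the normal of the
profile curve, obtained by inverting `x ↦ x ^ (m + 3) / P x` at `1 / cos ψ`. -/
lemma exists_radius (m : ℕ) (K l a : ℝ) (hK : 0 < K) (ha : 0 < a)
    (P Q : ℝ → ℝ) (hP : ∀ x, P x = l + K / 2 * x ^ 2) (hQ : ∀ x, Q x = (m + 1) * P x + 2 * l)
    (hPa : P a = a ^ (m + 3)) (hpos : ∀ x, a ≤ x → 0 < P x ∧ 0 < Q x) :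
    (∀ x, a ≤ x → 1 ≤ x ^ (m + 3) / P x) ∧
    ∃ R : ℝ → ℝ, (∀ x, a ≤ x → ∀ ψ, x ^ (m + 3) / P x = (Real.cos ψ)⁻¹ → R ψ = x) ∧
      ∀ ψ ∈ Set.Ioo (-(Real.pi / 2)) (Real.pi / 2),
        a ≤ R ψ ∧ R ψ ^ (m + 3) / P (R ψ) = (Real.cos ψ)⁻¹ ∧
        HasDerivAt R (R ψ * Real.tan ψ * (P (R ψ) / Q (R ψ))) ψ := by
  have hPc : Continuous P := by
    rw [show P = fun x => l + K / 2 * x ^ 2 from funext hP]; fun_prop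
  have hQc : Continuous Q := by
    rw [show Q = fun x => (m + 1) * P x + 2 * l from funext hQ]; fun_prop
  have hPm : ∀ x y, 0 < x → x ≤ y → P x ≤ P y := by
    intro x y hx hxy
    rw [hP, hP]
    gcongr
  have hQm : ∀ x y, 0 < x → x ≤ y → Q x ≤ Q y := by
    intro x y hx hxy
    have := hPm x y hx hxy
    rw [hQ, hQ]
    gcongr
  -- An open interval slightly larger than `[a, ∞)`, so that the inverse is differentiable at `1`.
  let s : Set ℝ := {x | 0 < x ∧ 0 < P x ∧ 0 < Q x}
  have has : ∀ x, a ≤ x → x ∈ s := fun x hx => ⟨ha.trans_le hx, hpos x hx⟩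
  have hs : IsOpen s := (isOpen_lt continuous_const continuous_id).inter
    ((isOpen_lt continuous_const hPc).inter (isOpen_lt continuous_const hQc))
  have hc : s.OrdConnected := by
    refine ⟨fun x hx y _ z hz => ⟨hx.1.trans_le hz.1, hx.2.1.trans_le (hPm x z hx.1 hz.1),
      hx.2.2.trans_le (hQm x z hx.1 hz.1)⟩⟩
  let q : ℝ → ℝ := fun x => x ^ (m + 3) / P x
  have hq : ∀ x ∈ s, HasDerivAt q (x ^ (m + 2) * Q x / P x ^ 2) x := by
    intro x hx
    have hPd : HasDerivAt P (K * x) x := by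
      rw [show P = fun x => l + K / 2 * x ^ 2 from funext hP]
      refine (((hasDerivAt_pow 2 x).const_mul (K / 2)).const_add l).congr_deriv ?_
      push_cast
      ring
    refine ((hasDerivAt_pow (m + 3) x).div hPd hx.2.1.ne').congr_deriv ?_
    congr 1
    have h2 : 2 * l = 2 * P x - K * x ^ 2 := by rw [hP]; ring
    rw [hQ, h2, show m + 3 - 1 = m + 2 by omega]
    push_cast
    ring
  obtain ⟨hmono, g, hgl, hgd⟩ := exists_inverse_of_deriv_pos s hs hc q _ hq fun x hx =>
    div_pos (mul_pos (pow_pos hx.1 _) hx.2.2) (pow_pos hx.2.1 2)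
  have hqa : q a = 1 := by
    change a ^ (m + 3) / P a = 1
    rw [← hPa]
    exact div_self (hpos a le_rfl).1.ne'
  have hsurj : ∀ y, 1 ≤ y → ∃ x, a ≤ x ∧ q x = y := by
    intro y hy
    -- For `x ≥ max a 1` one has `P x ≤ M x²`, hence `q x ≥ x / M`.
    let M : ℝ := a ^ (m + 1) + K / 2
    have hM : 0 < M := by positivity
    let x := max a (max 1 (y * M))
    have hxa : a ≤ x := le_max_left _ _
    have hx1 : 1 ≤ x := (le_max_left _ _).trans (le_max_right _ _)
    have hxy : y * M ≤ x := (le_max_right _ _).trans (le_max_right _ _)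
    have hPx : P x ≤ M * x ^ 2 := by
      have e1 : l = a ^ (m + 1) * a ^ 2 - K / 2 * a ^ 2 := by
        have := hP a
        rw [hPa] at this
        rw [show a ^ (m + 1) * a ^ 2 = a ^ (m + 3) by ring]
        linarith
      have e2 : a ^ (m + 1) * a ^ 2 ≤ a ^ (m + 1) * x ^ 2 := by gcongr
      have e3 : 0 ≤ K / 2 * a ^ 2 := by positivity
      rw [hP, e1]
      simp only [M]
      linarith
    have hyx : y ≤ q x := by
      change y ≤ x ^ (m + 3) / P x
      rw [le_div_iff₀ (hpos x hxa).1]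
      calc y * P x ≤ y * (M * x ^ 2) := by gcongr
        _ = (y * M) * x ^ 2 := by ring
        _ ≤ x * x ^ 2 := by gcongr
        _ = x ^ 3 := by ring
        _ ≤ x ^ (m + 3) := pow_le_pow_right₀ hx1 (by omega)
    have hcont : ContinuousOn q (Set.Icc a x) := fun z hz =>
      (hq z (has z hz.1)).continuousAt.continuousWithinAt
    obtain ⟨z, hz, hzy⟩ := intermediate_value_Icc hxa hcont ⟨hqa ▸ hy, hyx⟩
    exact ⟨z, hz.1, hzy⟩
  refine ⟨fun x hx => hqa.symm.le.trans (hmono.monotoneOn (has a le_rfl) (has x hx) hx),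
    fun ψ => g (Real.cos ψ)⁻¹, fun x hx ψ h => ?_, fun ψ hψ => ?_⟩
  · change g (Real.cos ψ)⁻¹ = x
    rw [← h]
    exact hgl x (has x hx)
  · have hcos : 0 < Real.cos ψ := Real.cos_pos_of_mem_Ioo ⟨by linarith [hψ.1], hψ.2⟩
    obtain ⟨x, hx, hxy⟩ := hsurj (Real.cos ψ)⁻¹ ((one_le_inv₀ hcos).2 (Real.cos_le_one ψ))
    have hxs := has x hx
    have hR : g (Real.cos ψ)⁻¹ = x := by rw [← hxy]; exact hgl x hxs
    have hd := hgd x hxs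
    rw [hxy] at hd
    have hd2 : HasDerivAt (fun ψ => (Real.cos ψ)⁻¹) (-(-Real.sin ψ) / Real.cos ψ ^ 2) ψ :=
      (Real.hasDerivAt_cos ψ).inv hcos.ne'
    simp only [hR]
    refine ⟨hx, hxy, (hd.comp ψ hd2).congr_deriv ?_⟩
    have hx0 := hxs.1
    have hPx := hxs.2.1
    have hQx := hxs.2.2
    have hcx : Real.cos ψ = P x / x ^ (m + 3) := by
      rw [← inv_inv (Real.cos ψ), ← hxy, inv_div]
    rw [Real.tan_eq_sin_div_cos, hcx]
    field_simp
    ring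

/-- The pointwise equation, from `tan ψ = r' / r` and `(cos ψ)⁻¹ = r ^ (m + 3) / P r`. -/
lemma eq44_of_angle (m : ℕ) (K l ρ ψ p : ℝ) (hρ : 0 < ρ) (hp : 0 < p)
    (hpl : p = l + K / 2 * ρ ^ 2) (hcos : 0 < Real.cos ψ)
    (h : ρ ^ (m + 3) / p = (Real.cos ψ)⁻¹) :
    Eq44 (m + 2) K ρ (ρ * Real.tan ψ) (ρ * Real.tan ψ * Real.tan ψ +
      ρ * ((Real.cos ψ ^ 2)⁻¹ * (((m + 1) * p + 2 * l) / p))) := by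
  have htan : Real.tan ψ ^ 2 = (Real.cos ψ)⁻¹ ^ 2 - 1 := by
    rw [inv_pow, ← Real.inv_one_add_tan_sq hcos.ne', inv_inv]
    ring
  have hsqrt : Real.sqrt (ρ ^ 2 + (ρ * Real.tan ψ) ^ 2) = ρ * (Real.cos ψ)⁻¹ := by
    rw [mul_pow, htan, ← Real.sqrt_sq (mul_pos hρ (inv_pos.2 hcos)).le]
    congr 1
    ring
  have hl : 2 * l = 2 * p - K * ρ ^ 2 := by rw [hpl]; ring
  have hnum : -(ρ * (ρ * Real.tan ψ * Real.tan ψ +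
      ρ * ((Real.cos ψ ^ 2)⁻¹ * (((m + 1) * p + 2 * l) / p)))) + 2 * (ρ * Real.tan ψ) ^ 2 + ρ ^ 2 =
      ρ ^ 2 * (Real.cos ψ)⁻¹ ^ 2 * (1 - ((m + 1) * p + 2 * l) / p) := by
    rw [← inv_pow]
    linear_combination ρ ^ 2 * htan
  unfold Eq44
  rw [hnum, hsqrt, ← h, hl]
  push_cast
  field_simp
  ring

/-- For `K > 0` and initial value `a > 0` with `a^{n−1} > K/(n+1)` and `a^{n−1} ≠ K/2`,
there is a C² solution of (44) on `[0, θ_max)` with `r(0) = a`, `r'(0) = 0`, which is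
strictly increasing on `(0, θ_max)` and blows up (`r → +∞`) as `θ → θ_max⁻`. -/
theorem eq44_blowup_solution (n : ℕ) (hn : 2 ≤ n) (K : ℝ) (hK : 0 < K)
    (a : ℝ) (ha : 0 < a) (h1 : K / ((n : ℝ) + 1) < a ^ (n - 1)) (h2 : a ^ (n - 1) ≠ K / 2) :
    ∃ θmax : ℝ, 0 < θmax ∧ ∃ r r' r'' : ℝ → ℝ,
      (∀ θ ∈ Set.Ico 0 θmax, HasDerivAt r (r' θ) θ) ∧
      (∀ θ ∈ Set.Ico 0 θmax, HasDerivAt r' (r'' θ) θ) ∧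
      ContinuousOn r'' (Set.Ico 0 θmax) ∧
      (∀ θ ∈ Set.Ico 0 θmax, 0 < r θ) ∧
      r 0 = a ∧ r' 0 = 0 ∧
      (∀ θ ∈ Set.Ioo 0 θmax, Eq44 n K (r θ) (r' θ) (r'' θ)) ∧
      StrictMonoOn r (Set.Ioo 0 θmax) ∧
      Filter.Tendsto r (nhdsWithin θmax (Set.Iio θmax)) Filter.atTop := by
  obtain ⟨m, rfl⟩ : ∃ m, n = m + 2 := ⟨n - 2, by omega⟩
  rw [show m + 2 - 1 = m + 1 by omega] at h1
  rw [div_lt_iff₀ (by positivity)] at h1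
  push_cast at h1
  let l : ℝ := a ^ (m + 3) - K / 2 * a ^ 2
  let P : ℝ → ℝ := fun x => l + K / 2 * x ^ 2
  let Q : ℝ → ℝ := fun x => (m + 1) * P x + 2 * l
  have hPa : P a = a ^ (m + 3) := by simp only [P, l]; ring
  have hPa0 : 0 < P a := by rw [hPa]; positivity
  have hQa : 0 < Q a := by
    have : Q a = a ^ 2 * (a ^ (m + 1) * (m + 2 + 1) - K) := by simp only [Q, hPa, l]; ring
    rw [this]
    exact mul_pos (by positivity) (by linarith)
  have hPm : ∀ x, a ≤ x → P a ≤ P x := fun x hx => by simp only [P]; gcongr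
  -- `Q - δ P` is nondecreasing on `[a, ∞)` for `δ ≤ 1` and nonnegative at `a` for `δ ≤ Q a / P a`.
  obtain ⟨δ, hδ, hδQ⟩ : ∃ δ : ℝ, 0 < δ ∧ ∀ x, a ≤ x → δ * P x ≤ Q x := by
    refine ⟨min 1 (Q a / P a), lt_min one_pos (div_pos hQa hPa0), fun x hx => ?_⟩
    have e1 : min 1 (Q a / P a) * P a ≤ Q a := by
      rw [← le_div_iff₀ hPa0]; exact min_le_right _ _
    have e2 : min 1 (Q a / P a) * (P x - P a) ≤ 1 * (P x - P a) :=
      mul_le_mul_of_nonneg_right (min_le_left _ _) (sub_nonneg.2 (hPm x hx))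
    have e3 : Q x - Q a = 1 * (P x - P a) + m * (P x - P a) := by simp only [Q]; ring
    have e4 : 0 ≤ m * (P x - P a) := mul_nonneg (Nat.cast_nonneg m) (sub_nonneg.2 (hPm x hx))
    linarith
  have hpos : ∀ x, a ≤ x → 0 < P x ∧ 0 < Q x := fun x hx => by
    have hp := hPa0.trans_le (hPm x hx)
    exact ⟨hp, (mul_pos hδ hp).trans_le (hδQ x hx)⟩
  obtain ⟨hq1, R, hRinv, hR⟩ := exists_radius m K l a hK ha P Q (fun _ => rfl) (fun _ => rfl) hPa hpos
  have hpi := Real.pi_div_two_pos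
  let I : Set ℝ := Set.Ioo (-(Real.pi / 2)) (Real.pi / 2)
  have hI0 : ∀ ψ, 0 ≤ ψ → ψ < Real.pi / 2 → ψ ∈ I := fun ψ h h' => ⟨by linarith, h'⟩
  have hR0 : R 0 = a := hRinv a le_rfl 0 (by rw [← hPa, div_self hPa0.ne', Real.cos_zero, inv_one])
  let w : ℝ → ℝ := fun ψ => P (R ψ) / Q (R ψ)
  have hwpos : ∀ ψ ∈ I, 0 < w ψ := fun ψ hψ =>
    div_pos (hpos _ (hR ψ hψ).1).1 (hpos _ (hR ψ hψ).1).2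
  have hwle : ∀ ψ ∈ I, w ψ ≤ δ⁻¹ := fun ψ hψ => by
    have hx := (hR ψ hψ).1
    change P (R ψ) / Q (R ψ) ≤ δ⁻¹
    rw [div_le_iff₀ (hpos _ hx).2, ← div_eq_inv_mul, le_div_iff₀ hδ, mul_comm]
    exact hδQ _ hx
  have hPc : Continuous P := by fun_prop
  have hQc : Continuous Q := by fun_prop
  have hwc : ∀ ψ ∈ I, ContinuousAt w ψ := fun ψ hψ =>
    (hPc.continuousAt.comp (hR ψ hψ).2.2.continuousAt).div
      (hQc.continuousAt.comp (hR ψ hψ).2.2.continuousAt) (hpos _ (hR ψ hψ).1).2.ne'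
  have hwcon : ContinuousOn w I := fun ψ hψ => (hwc ψ hψ).continuousWithinAt
  have hIc : I.OrdConnected := Set.ordConnected_Ioo
  let Θ : ℝ → ℝ := fun ψ => ∫ t in (0 : ℝ)..ψ, w t
  have hint : ∀ ψ ∈ I, IntervalIntegrable w MeasureTheory.volume 0 ψ := fun ψ hψ =>
    (hwcon.mono (hIc.uIcc_subset (hI0 0 le_rfl hpi) hψ)).intervalIntegrable
  have hΘd : ∀ ψ ∈ I, HasDerivAt Θ (w ψ) ψ := fun ψ hψ =>
    intervalIntegral.integral_hasDerivAt_right (hint ψ hψ)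
      (hwcon.stronglyMeasurableAtFilter isOpen_Ioo ψ hψ) (hwc ψ hψ)
  have hΘ0 : Θ 0 = 0 := intervalIntegral.integral_same
  have hΘc : ContinuousOn Θ I := fun ψ hψ => (hΘd ψ hψ).continuousAt.continuousWithinAt
  obtain ⟨hΘm, Ψ, hΨl, hΨd⟩ := exists_inverse_of_deriv_pos I isOpen_Ioo hIc Θ w hΘd hwpos
  have hΘle : ∀ ψ, 0 ≤ ψ → ψ < Real.pi / 2 → Θ ψ ≤ δ⁻¹ * (Real.pi / 2) := by
    intro ψ h h'
    have e1 : Θ ψ ≤ ∫ _ in (0 : ℝ)..ψ, δ⁻¹ :=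
      intervalIntegral.integral_mono_on h (hint ψ (hI0 ψ h h')) intervalIntegrable_const
        fun t ht => hwle t (hI0 t ht.1 (ht.2.trans_lt h'))
    rw [intervalIntegral.integral_const, smul_eq_mul, sub_zero, mul_comm] at e1
    exact e1.trans (mul_le_mul_of_nonneg_left h'.le (inv_pos.2 hδ).le)
  let S : Set ℝ := Θ '' Set.Ico 0 (Real.pi / 2)
  have hSne : S.Nonempty := ⟨Θ 0, 0, ⟨le_rfl, hpi⟩, rfl⟩
  have hSb : BddAbove S := by
    refine ⟨δ⁻¹ * (Real.pi / 2), ?_⟩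
    rintro _ ⟨ψ, hψ, rfl⟩
    exact hΘle ψ hψ.1 hψ.2
  have hlt : ∀ ψ, 0 ≤ ψ → ψ < Real.pi / 2 → Θ ψ < sSup S := by
    intro ψ h h'
    obtain ⟨χ, hχ, hχ'⟩ := exists_between h'
    exact (hΘm (hI0 ψ h h') (hI0 χ (h.trans hχ.le) hχ') hχ).trans_le
      (le_csSup hSb ⟨χ, ⟨h.trans hχ.le, hχ'⟩, rfl⟩)
  have hsurj : ∀ θ ∈ Set.Ico 0 (sSup S), ∃ ψ, 0 ≤ ψ ∧ ψ < Real.pi / 2 ∧ Θ ψ = θ := by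
    intro θ hθ
    obtain ⟨_, ⟨χ, hχ, rfl⟩, hχθ⟩ := exists_lt_of_lt_csSup hSne hθ.2
    obtain ⟨ψ, hψ, e⟩ := intermediate_value_Icc hχ.1
      (hΘc.mono (hIc.out (hI0 0 le_rfl hpi) (hI0 χ hχ.1 hχ.2))) ⟨hΘ0.le.trans hθ.1, hχθ.le⟩
    exact ⟨ψ, hψ.1, hψ.2.trans_lt hχ.2, e⟩
  have hmax : 0 < sSup S := hΘ0 ▸ hlt 0 le_rfl hpi
  -- On `[0, sup S)`, `Ψ` takes values in `[0, π/2)` and satisfies `Ψ' = Q / P`.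
  have hΨ : ∀ θ ∈ Set.Ico 0 (sSup S), 0 ≤ Ψ θ ∧ Ψ θ < Real.pi / 2 ∧ Θ (Ψ θ) = θ ∧
      HasDerivAt Ψ (w (Ψ θ))⁻¹ θ := by
    intro θ hθ
    obtain ⟨ψ, h0, h', rfl⟩ := hsurj θ hθ
    rw [hΨl ψ (hI0 ψ h0 h')]
    exact ⟨h0, h', rfl, hΨd ψ (hI0 ψ h0 h')⟩
  have hΨI : ∀ θ ∈ Set.Ico 0 (sSup S), Ψ θ ∈ I := fun θ hθ => hI0 _ (hΨ θ hθ).1 (hΨ θ hθ).2.1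
  have hcos : ∀ θ ∈ Set.Ico 0 (sSup S), 0 < Real.cos (Ψ θ) := fun θ hθ =>
    Real.cos_pos_of_mem_Ioo (hΨI θ hθ)
  have hΨ0 : Ψ 0 = 0 := by
    have := hΨl 0 (hI0 0 le_rfl hpi)
    rwa [hΘ0] at this
  let r : ℝ → ℝ := fun θ => R (Ψ θ)
  have hrpos : ∀ θ ∈ Set.Ico 0 (sSup S), 0 < r θ := fun θ hθ =>
    ha.trans_le (hR _ (hΨI θ hθ)).1
  have hr : ∀ θ ∈ Set.Ico 0 (sSup S), HasDerivAt r (r θ * Real.tan (Ψ θ)) θ := by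
    intro θ hθ
    refine ((hR _ (hΨI θ hθ)).2.2.comp θ (hΨ θ hθ).2.2.2).congr_deriv ?_
    change r θ * Real.tan (Ψ θ) * w (Ψ θ) * (w (Ψ θ))⁻¹ = _
    rw [mul_assoc, mul_inv_cancel₀ (hwpos _ (hΨI θ hθ)).ne', mul_one]
  have hrcon : ContinuousOn r (Set.Ico 0 (sSup S)) := fun θ hθ =>
    (hr θ hθ).continuousAt.continuousWithinAt
  have hΨcon : ContinuousOn Ψ (Set.Ico 0 (sSup S)) := fun θ hθ =>
    (hΨ θ hθ).2.2.2.continuousAt.continuousWithinAt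
  have hmono : StrictMonoOn r (Set.Ico 0 (sSup S)) := by
    refine strictMonoOn_of_deriv_pos (convex_Ico _ _) hrcon fun θ hθ => ?_
    rw [interior_Ico] at hθ
    have hθ' : θ ∈ Set.Ico 0 (sSup S) := ⟨hθ.1.le, hθ.2⟩
    rw [(hr θ hθ').deriv]
    obtain ⟨h0, h', hΘ, -⟩ := hΨ θ hθ'
    refine mul_pos (hrpos θ hθ') (Real.tan_pos_of_pos_of_lt_pi_div_two (h0.lt_of_ne ?_) h')
    intro h
    rw [← h, hΘ0] at hΘ
    exact hθ.1.ne hΘ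
  refine ⟨sSup S, hmax, r, fun θ => r θ * Real.tan (Ψ θ),
    fun θ => r θ * Real.tan (Ψ θ) * Real.tan (Ψ θ) +
      r θ * ((Real.cos (Ψ θ) ^ 2)⁻¹ * (Q (r θ) / P (r θ))), hr, fun θ hθ => ?_, ?_, hrpos, ?_, ?_,
    fun θ hθ => ?_, hmono.mono Set.Ioo_subset_Ico_self, ?_⟩
  · refine ((hr θ hθ).mul ((Real.hasDerivAt_tan (hcos θ hθ).ne').comp θ
      (hΨ θ hθ).2.2.2)).congr_deriv ?_
    simp only [w, inv_div, one_div]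
    rfl
  · have htan : ContinuousOn (fun θ => Real.tan (Ψ θ)) (Set.Ico 0 (sSup S)) := fun θ hθ =>
      (Real.continuousAt_tan.2 (hcos θ hθ).ne').comp_continuousWithinAt (hΨcon θ hθ)
    refine ((hrcon.mul htan).mul htan).add (hrcon.mul ((ContinuousOn.inv₀ ?_ ?_).mul
      (ContinuousOn.div ?_ ?_ ?_)))
    · exact (Real.continuous_cos.comp_continuousOn hΨcon).pow 2
    · exact fun θ hθ => (pow_pos (hcos θ hθ) 2).ne'
    · exact hQc.comp_continuousOn hrcon
    · exact hPc.comp_continuousOn hrcon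
    · exact fun θ hθ => (hpos _ (hR _ (hΨI θ hθ)).1).1.ne'
  · change R (Ψ 0) = a
    rw [hΨ0, hR0]
  · simp only [hΨ0, Real.tan_zero, mul_zero]
  · have hθ' : θ ∈ Set.Ico 0 (sSup S) := ⟨hθ.1.le, hθ.2⟩
    exact eq44_of_angle m K l (r θ) (Ψ θ) (P (r θ)) (hrpos θ hθ')
      (hpos _ (hR _ (hΨI θ hθ')).1).1 rfl (hcos θ hθ') (hR _ (hΨI θ hθ')).2.1
  · rw [Filter.tendsto_atTop]
    intro M
    -- The value `x = max a M` is attained at `ψ = arccos (P x / x ^ (m + 3))`.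
    let x := max a M
    have hxa : a ≤ x := le_max_left _ _
    have hx0 : 0 < x := ha.trans_le hxa
    have hc0 : 0 < P x / x ^ (m + 3) := div_pos (hpos x hxa).1 (pow_pos hx0 _)
    have hc1 : P x / x ^ (m + 3) ≤ 1 := by
      rw [← inv_div]
      exact inv_le_one_of_one_le₀ (hq1 x hxa)
    let ψ := Real.arccos (P x / x ^ (m + 3))
    have hψ0 : 0 ≤ ψ := Real.arccos_nonneg _
    have hψ1 : ψ < Real.pi / 2 := Real.arccos_lt_pi_div_two.2 hc0
    have hRψ : R ψ = x := hRinv x hxa ψ (by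
      rw [Real.cos_arccos (by linarith) hc1, inv_div])
    have hΘψ : 0 ≤ Θ ψ := by
      rw [← hΘ0]; exact hΘm.monotoneOn (hI0 0 le_rfl hpi) (hI0 ψ hψ0 hψ1) hψ0
    filter_upwards [Ioo_mem_nhdsLT (hlt ψ hψ0 hψ1)] with θ hθ
    have e := hmono ⟨hΘψ, hθ.1.trans hθ.2⟩ ⟨hΘψ.trans hθ.1.le, hθ.2⟩ hθ.1
    have e' : r (Θ ψ) = x := by
      change R (Ψ (Θ ψ)) = x
      rw [hΨl ψ (hI0 ψ hψ0 hψ1), hRψ]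
    rw [e'] at e
    exact (le_max_right a M).trans e.le
end

section
/- Let n ≥ 2 be an integer, K > 0, and a > 0 with (n+1)·a^{n−1} > K. Set λ = a^{n+1} − (K/2)·a², and assume that ρ^{n+1} > λ + (K/2)·ρ² for all ρ > a. Then the function ρ ↦ (λ + (K/2)ρ²) / ( ρ·√(ρ^{2(n+1)} − (λ + (K/2)ρ²)²) ) is integrable on the interval (a, ∞); in particular the improper integral (57), θ_max = ∫_a^∞ (λ + (K/2)ρ²) dρ / ( ρ·√(ρ^{2(n+1)} − (λ + (K/2)ρ²)²) ), is finite. -/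
/-!
Put `F ρ = ρ^(n+1) - (λ + (K/2)ρ²) = (ρ^(n+1) - a^(n+1)) - (K/2)(ρ² - a²)`. The elementary inequality
`(n+1) a^(n-1) (ρ² - a²) ≤ 2 (ρ^(n+1) - a^(n+1))` for `ρ ≥ a` (`half_mul_sq_sub_le`) shows that
`F ρ ≥ c (ρ^(n+1) - a^(n+1)) ≥ c ρ^n (ρ - a)` with `c = 1 - K / ((n+1) a^(n-1)) > 0`, so the radicand
is at least `c ρ^(2(n+1)) (1 - a/ρ)`. As the numerator is `O(ρ²)` and `n ≥ 2`, the integrand is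
dominated by a constant multiple of `(a/ρ²) / (2 √(1 - a/ρ))`, the derivative of the bounded increasing
function `√(1 - a/ρ)`, which is therefore integrable on `(a, ∞)`. This single majorant controls both the
singularity at `a` and the decay at infinity.
-/

/-- Equality holds at `m = 0`, which starts the induction; `m` plays the role of `n - 1`. -/
theorem half_mul_sq_sub_le (a x : ℝ) (ha : 0 < a) (hx : a ≤ x) (m : ℕ) :
    ((m : ℝ) + 2) * a ^ m * (x ^ 2 - a ^ 2) ≤ 2 * (x ^ (m + 2) - a ^ (m + 2)) := by
  induction m with
  | zero => simp
  | succ k ih =>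
    have h1 : a ^ (k + 1) ≤ x ^ (k + 1) := pow_le_pow_left₀ ha.le hx _
    have h0 : 0 < a ^ (k + 1) := by positivity
    have h2 : a ^ (k + 1) * (x + a) ≤ 2 * (x ^ (k + 1) * x) := by
      nlinarith [mul_le_mul_of_nonneg_right h1 (ha.le.trans hx)]
    have h3 := mul_le_mul_of_nonneg_right h2 (sub_nonneg.2 hx)
    have h4 := mul_le_mul_of_nonneg_left ih ha.le
    push_cast
    calc ((k : ℝ) + 1 + 2) * a ^ (k + 1) * (x ^ 2 - a ^ 2)
        = a * (((k : ℝ) + 2) * a ^ k * (x ^ 2 - a ^ 2))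
            + a ^ (k + 1) * (x + a) * (x - a) := by ring
      _ ≤ a * (2 * (x ^ (k + 2) - a ^ (k + 2))) + 2 * (x ^ (k + 1) * x) * (x - a) :=
          add_le_add h4 h3
      _ = 2 * (x ^ (k + 1 + 2) - a ^ (k + 1 + 2)) := by ring

/-- The majorant is the derivative of `√(1 - a/x)`, which increases from `0` to `1` on `(a, ∞)`. -/
theorem integrableOn_majorant (a : ℝ) (ha : 0 < a) :
    MeasureTheory.IntegrableOn
      (fun x : ℝ => (a / x ^ 2) / (2 * Real.sqrt (1 - a / x))) (Set.Ioi a) := by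
  refine MeasureTheory.integrableOn_Ioi_deriv_of_nonneg (l := Real.sqrt (1 - 0))
    (g := fun x : ℝ => Real.sqrt (1 - a / x)) ?_ ?_ ?_ ?_
  · apply ContinuousAt.continuousWithinAt
    have : a ≠ 0 := ha.ne'
    fun_prop (disch := assumption)
  · intro x hx
    have hx' : a < x := hx
    have hx0 : 0 < x := ha.trans hx'
    have hu : 0 < 1 - a / x := by rw [sub_pos, div_lt_one hx0]; exact hx'
    have h := ((hasDerivAt_inv hx0.ne').const_mul a).const_sub 1
    have h' := h.sqrt (by rw [← div_eq_mul_inv]; exact hu.ne')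
    simp only [← div_eq_mul_inv] at h'
    convert h' using 2
    ring
  · intro x _
    positivity
  · exact (tendsto_const_nhds.sub (Filter.Tendsto.const_div_atTop Filter.tendsto_id a)).sqrt

/-- Convergence of the improper integral (57): under the hypotheses `(n+1)·a^{n−1} > K`
and `ρ^{n+1} > λ + (K/2)ρ²` for `ρ > a`, the integrand
`(λ + (K/2)ρ²)/(ρ·√(ρ^{2(n+1)} − (λ + (K/2)ρ²)²))` is integrable on `(a, ∞)`;
in particular the maximal angle `θ_max` of existence is finite. -/
theorem integral_theta_max_finite (n : ℕ) (hn : 2 ≤ n) (K a lam : ℝ)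
    (hK : 0 < K) (ha : 0 < a)
    (h1 : K < ((n : ℝ) + 1) * a ^ (n - 1))
    (hlam : lam = a ^ (n + 1) - K / 2 * a ^ 2)
    (hgt : ∀ ρ : ℝ, a < ρ → lam + K / 2 * ρ ^ 2 < ρ ^ (n + 1)) :
    MeasureTheory.IntegrableOn
      (fun ρ : ℝ => (lam + K / 2 * ρ ^ 2) /
        (ρ * Real.sqrt (ρ ^ (2 * (n + 1)) - (lam + K / 2 * ρ ^ 2) ^ 2)))
      (Set.Ioi a) := by
  obtain ⟨m, rfl⟩ : ∃ m, n = m + 2 := ⟨n - 2, by omega⟩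
  have e1 : m + 2 - 1 = m + 1 := by omega
  rw [e1] at h1
  push_cast at h1
  have hD : 0 < ((m : ℝ) + 2 + 1) * a ^ (m + 1) := by positivity
  obtain ⟨c, hc⟩ : ∃ c : ℝ, c = 1 - K / (((m : ℝ) + 2 + 1) * a ^ (m + 1)) := ⟨_, rfl⟩
  have hc0 : 0 < c := by rw [hc, sub_pos, div_lt_one hD]; exact h1
  have hKc : K = (1 - c) * (((m : ℝ) + 2 + 1) * a ^ (m + 1)) := by
    rw [hc]; field_simp; ring
  have hc1 : 0 < 1 - c := by
    by_contra hneg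
    have := mul_nonpos_of_nonpos_of_nonneg (not_lt.1 hneg) hD.le
    linarith
  have hsc : 0 < Real.sqrt c := Real.sqrt_pos.2 hc0
  refine ((integrableOn_majorant a ha).const_mul
    (2 * (a ^ (m + 1) + K / 2) / (Real.sqrt c * a ^ (m + 1)))).mono' ?_ ?_
  · apply Measurable.aestronglyMeasurable
    fun_prop
  · refine (MeasureTheory.ae_restrict_iff' measurableSet_Ioi).2 (Filter.Eventually.of_forall ?_)
    intro x hx
    have hx' : a < x := hx
    have hx0 : 0 < x := ha.trans hx'
    have hu : 0 < 1 - a / x := by rw [sub_pos, div_lt_one hx0]; exact hx'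
    have hsu : 0 < Real.sqrt (1 - a / x) := Real.sqrt_pos.2 hu
    have hsq : a ^ 2 ≤ x ^ 2 := pow_le_pow_left₀ ha.le hx'.le 2
    have hG0 : 0 < lam + K / 2 * x ^ 2 := by
      have : 0 < a ^ (m + 2 + 1) := by positivity
      rw [hlam]; nlinarith
    have hG : lam + K / 2 * x ^ 2 ≤ (a ^ (m + 1) + K / 2) * x ^ 2 := by
      have h := mul_le_mul_of_nonneg_left hsq (by positivity : 0 ≤ a ^ (m + 1))
      have h2 : 0 ≤ K / 2 * a ^ 2 := by positivity
      have h3 : a ^ (m + 2 + 1) = a ^ (m + 1) * a ^ 2 := by ring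
      rw [hlam, h3]; nlinarith
    have hF : c * (x ^ (m + 2) * (x - a)) ≤ x ^ (m + 2 + 1) - (lam + K / 2 * x ^ 2) := by
      have h := half_mul_sq_sub_le a x ha hx'.le (m + 1)
      push_cast at h
      have h' := mul_le_mul_of_nonneg_left h hc1.le
      have h2 : x ^ (m + 2) * (x - a) ≤ x ^ (m + 2 + 1) - a ^ (m + 2 + 1) := by
        have := mul_le_mul_of_nonneg_right (pow_le_pow_left₀ ha.le hx'.le (m + 2)) ha.le
        rw [pow_succ x (m + 2), pow_succ a (m + 2)]; linarith
      have h2' := mul_le_mul_of_nonneg_left h2 hc0.le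
      have h3 : K * (x ^ 2 - a ^ 2) ≤ (1 - c) * (2 * (x ^ (m + 2 + 1) - a ^ (m + 2 + 1))) := by
        calc K * (x ^ 2 - a ^ 2)
            = (1 - c) * (((m : ℝ) + 1 + 2) * a ^ (m + 1) * (x ^ 2 - a ^ 2)) := by
              rw [hKc]; ring
          _ ≤ _ := h'
      rw [hlam]; linarith
    -- The radicand factors as a difference of squares; the sum factor is at least `x ^ (n + 1)`.
    have hR : c * (1 - a / x) * (x ^ (m + 3)) ^ 2
        ≤ x ^ (2 * (m + 2 + 1)) - (lam + K / 2 * x ^ 2) ^ 2 := by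
      have hP : 0 < x ^ (m + 2 + 1) := by positivity
      have hF0 : 0 ≤ c * (x ^ (m + 2) * (x - a)) :=
        mul_nonneg hc0.le (mul_nonneg (by positivity) (sub_nonneg.2 hx'.le))
      calc c * (1 - a / x) * (x ^ (m + 3)) ^ 2
          = c * (x ^ (m + 2) * (x - a)) * x ^ (m + 2 + 1) := by field_simp; ring
        _ ≤ (x ^ (m + 2 + 1) - (lam + K / 2 * x ^ 2))
              * (x ^ (m + 2 + 1) + (lam + K / 2 * x ^ 2)) :=
            mul_le_mul hF (by linarith) hP.le (hF0.trans hF)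
        _ = _ := by ring
    have hS : Real.sqrt c * Real.sqrt (1 - a / x) * x ^ (m + 3)
        ≤ Real.sqrt (x ^ (2 * (m + 2 + 1)) - (lam + K / 2 * x ^ 2) ^ 2) := by
      have h := Real.sqrt_le_sqrt hR
      rwa [Real.sqrt_mul (by positivity), Real.sqrt_mul hc0.le,
        Real.sqrt_sq (by positivity)] at h
    rw [Real.norm_of_nonneg (div_nonneg hG0.le (by positivity))]
    have hxa : a ^ m ≤ x ^ m := pow_le_pow_left₀ ha.le hx'.le m
    calc (lam + K / 2 * x ^ 2) /
          (x * Real.sqrt (x ^ (2 * (m + 2 + 1)) - (lam + K / 2 * x ^ 2) ^ 2))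
        ≤ ((a ^ (m + 1) + K / 2) * x ^ 2) /
          (x * (Real.sqrt c * Real.sqrt (1 - a / x) * x ^ (m + 3))) :=
          div_le_div₀ (by positivity) hG (by positivity)
            (mul_le_mul_of_nonneg_left hS hx0.le)
      _ = (a ^ (m + 1) + K / 2) / (Real.sqrt c * Real.sqrt (1 - a / x) * x ^ 2 * x ^ m) := by
          rw [div_eq_div_iff (by positivity) (by positivity)]; ring
      _ ≤ (a ^ (m + 1) + K / 2) / (Real.sqrt c * Real.sqrt (1 - a / x) * x ^ 2 * a ^ m) :=
          div_le_div_of_nonneg_left (by positivity) (by positivity)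
            (mul_le_mul_of_nonneg_left hxa (by positivity))
      _ = 2 * (a ^ (m + 1) + K / 2) / (Real.sqrt c * a ^ (m + 1)) *
          (a / x ^ 2 / (2 * Real.sqrt (1 - a / x))) := by
          rw [div_div, div_mul_div_comm, div_eq_div_iff (by positivity) (by positivity)]; ring
end
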